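/- Let R be a commutative Noetherian ring, 𝔞 a proper ideal of R, t ≥ 0 an integer, and M an R-module such that Ext^i_R(R/𝔞, M) is a finitely generated R-module for every i ≥ 0. If H^i_𝔞(M) belongs to FD_{≤1} for every integer 0 ≤ i < t, then the set of associated primes Ass_R H^t_𝔞(M) is finite. -/

import Mathlib

open CategoryTheory

universe u

/-- The `R`-module `Ext^i_R(N, M)` for two `R`-modules (objects of `ModuleCat R`). -/
noncomputable def extObj {R : Type u} [CommRing R] (N M : ModuleCat.{u} R) (i : ℕ) :
    ModuleCat.{u} R :=
  ((Ext R (ModuleCat.{u} R) i).obj (Opposite.op N)).obj M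

/-- The `R`-module `Ext^i_R(R/𝔞, M)`. -/
noncomputable def extIdeal {R : Type u} [CommRing R] (𝔞 : Ideal R) (i : ℕ)
    (M : ModuleCat.{u} R) : ModuleCat.{u} R :=
  extObj (ModuleCat.of R (R ⧸ 𝔞)) M i

/-- An `R`-module `M` is `𝔞`-cofinite if `Supp_R M ⊆ V(𝔞)` and `Ext^i_R(R/𝔞, M)` is a finitely
generated `R`-module for every `i ≥ 0`. -/
def IsCofinite {R : Type u} [CommRing R] (𝔞 : Ideal R) (M : ModuleCat.{u} R) : Prop :=
  Module.support R M ⊆ PrimeSpectrum.zeroLocus (𝔞 : Set R) ∧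
    ∀ i : ℕ, Module.Finite R (extIdeal 𝔞 i M)

/-- The Krull dimension `dim_R M` of an `R`-module `M`: the Krull dimension of its support,
i.e. the supremum of `dim R/𝔭` over primes `𝔭` in the support of `M`. -/
noncomputable def moduleDim (R : Type u) [CommRing R] (M : Type u) [AddCommGroup M]
    [Module R M] : WithBot ℕ∞ :=
  Order.krullDim (Module.support R M)

/-- An `R`-module `M` is in `FD_{≤n}` if there is a finitely generated submodule `N ⊆ M`
with `dim_R (M/N) ≤ n`. -/
def MemFD (R : Type u) [CommRing R] (n : ℕ) (M : Type u) [AddCommGroup M] [Module R M] : Prop :=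
  ∃ N : Submodule R M, N.FG ∧ moduleDim R (M ⧸ N) ≤ (n : WithBot ℕ∞)

/-- An `R`-module `M` is `𝔞`-torsion if every element is annihilated by some power of `𝔞`. -/
def IsTorsionIdeal {R : Type u} [CommRing R] (𝔞 : Ideal R) (M : Type u) [AddCommGroup M]
    [Module R M] : Prop :=
  ∀ m : M, ∃ n : ℕ, ∀ a ∈ 𝔞 ^ n, a • m = 0

/-- The arithmetic rank of an ideal `𝔞`: the least `n` such that there exist `a₁, …, aₙ ∈ R`
with `Rad (a₁, …, aₙ) = Rad 𝔞`. -/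
noncomputable def arithRank {R : Type u} [CommRing R] (𝔞 : Ideal R) : ℕ :=
  sInf {n : ℕ | ∃ f : Fin n → R, (Ideal.span (Set.range f)).radical = 𝔞.radical}

/-!
Call a module `T` finite in degree `i` when `Ext^i_R(R/𝔞, T)` is finitely generated.
For an `𝔞`-torsion module `H`, the associated primes of `H` are those of `Hom_R(R/𝔞, H)`, so they
are finite in number as soon as `H` is finite in degree `0`.

Dimension shifting (divide `M` by its `𝔞`-torsion and embed the quotient in an `𝔞`-torsion-free
injective module) shows that `H^t_𝔞(M)` is finite in degrees `0` and `1` if `M` is finite in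
degrees `≤ t + 1` and the lower local cohomology modules are finite in all degrees. The latter is
obtained inductively from a cofiniteness criterion: an `𝔞`-torsion module of dimension at most `1`
that is finite in degrees `0` and `1` is finite in all degrees. For the criterion, take `x ∈ 𝔞`.
At a minimal prime of the support the localized module is artinian, hence is the sum of the kernel
and the image of `x ^ n` for large `n`; as there are only finitely many such primes, the quotient
by this sum has smaller dimension for some `n`, and induction on the dimension applies to it. The
kernels are handled by noetherian induction on an ideal contained in `Rad (Ann T)`.
-/

open Opposite

noncomputable section ExtComparison

open ProjectiveResolution

variable {R : Type u} [CommRing R]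

/-- The map induced on `Hom(-, M)` by a chain map. -/
def linearYonedaObjMap {X Y : ChainComplex (ModuleCat.{u} R) ℕ} (φ : X ⟶ Y) (M : ModuleCat.{u} R) :
    Y.linearYonedaObj R M ⟶ X.linearYonedaObj R M :=
  (HomologicalComplex.unopFunctor _ _).map
    ((((linearYoneda R (ModuleCat.{u} R)).obj M).rightOp.mapHomologicalComplex _).map φ).op

lemma comp_inv_eq_of_comp_eq {C : Type*} [Category C] {A A' B B' D D' : C} (a : A ⟶ A')
    (e : A ⟶ B) (e' : A' ⟶ B') (b : B ⟶ B') (i : D ≅ B) (i' : D' ≅ B') (d : D ⟶ D')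
    (h : a ≫ e' = e ≫ b) (h' : i.hom ≫ b = d ≫ i'.hom) :
    a ≫ e' ≫ i'.inv = (e ≫ i.inv) ≫ d := by
  rw [reassoc_of% h, Category.assoc]
  congr 1
  rw [Iso.comp_inv_eq, Category.assoc, ← h', Iso.inv_hom_id_assoc]

lemma isoExt_naturality {X Y : ModuleCat.{u} R} (f : X ⟶ Y) (P : ProjectiveResolution X)
    (Q : ProjectiveResolution Y) (φ : P.complex ⟶ Q.complex)
    (comm : φ.f 0 ≫ Q.π.f 0 = P.π.f 0 ≫ f) (n : ℕ) (M : ModuleCat.{u} R) :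
    ((Ext R (ModuleCat.{u} R) n).map f.op).app M ≫ (P.isoExt n M).hom =
      (Q.isoExt n M).hom ≫ HomologicalComplex.homologyMap (linearYonedaObjMap φ M) n := by
  have h2 := congrArg Quiver.Hom.unop
    (HomologicalComplex.homologyOp_hom_naturality (linearYonedaObjMap φ M) n)
  have h3 := congrArg Quiver.Hom.unop
    (ProjectiveResolution.isoLeftDerivedObj_inv_naturality f P Q φ comm
      ((linearYoneda R (ModuleCat.{u} R)).obj M).rightOp n)
  set F := ((linearYoneda R (ModuleCat.{u} R)).obj M).rightOp
  exact comp_inv_eq_of_comp_eq _ _ _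
    ((F.mapHomologicalComplex _ ⋙ HomologicalComplex.homologyFunctor _ _ n).map φ).unop
    (HomologicalComplex.homologyUnop ((F.mapHomologicalComplex _).obj Q.complex) n)
    (HomologicalComplex.homologyUnop ((F.mapHomologicalComplex _).obj P.complex) n) _ h3 h2

lemma extMk_zero_eq_zero_iff {X Y : ModuleCat.{u} R} (P : ProjectiveResolution X)
    (f : P.complex.X 0 ⟶ Y) (hf : P.complex.d 1 0 ≫ f = 0) :
    P.extMk f 1 rfl hf = 0 ↔ f = 0 := by
  constructor
  · intro h
    rw [← P.extEquivCohomologyClass.apply_eq_iff_eq, extEquivCohomologyClass_extMk,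
      extEquivCohomologyClass_zero, CochainComplex.HomComplex.CohomologyClass.mk_eq_zero_iff,
      CochainComplex.HomComplex.Cocycle.toSingleMk_mem_coboundaries_iff _ _ _ _ _ 1 (by simp)] at h
    obtain ⟨g, hg⟩ := h
    have h0 : P.cochainComplex.d (-((0:ℕ):ℤ)) 1 = 0 :=
      (P.cochainComplex.isZero_of_isStrictlyLE 0 1 (by simp)).eq_of_tgt _ _
    rw [h0, Limits.zero_comp] at hg
    rw [← cancel_epi (P.cochainComplexXIso (-((0:ℕ):ℤ)) 0 rfl).hom]
    simpa using hg.symm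
  · rintro rfl
    simp

lemma extMk_eq_zero_iff_exists_prev {X Y : ModuleCat.{u} R} (P : ProjectiveResolution X) (n : ℕ)
    (f : P.complex.X n ⟶ Y) (hf : P.complex.d (n + 1) n ≫ f = 0) :
    P.extMk f (n + 1) rfl hf = 0 ↔
      ∃ g : P.complex.X ((ComplexShape.up ℕ).prev n) ⟶ Y,
        P.complex.d n ((ComplexShape.up ℕ).prev n) ≫ g = f := by
  cases n with
  | zero =>
    rw [extMk_zero_eq_zero_iff]
    simp [eq_comm]
  | succ n =>
    rw [extMk_eq_zero_iff _ _ _ _ _ n rfl, CochainComplex.prev_nat_succ]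

variable {X : ModuleCat.{u} R} (P : ProjectiveResolution X) (M : ModuleCat.{u} R) (n : ℕ)

/-- The morphism underlying a cycle of `Hom(P, M)`. -/
abbrev cocycleOfCycles (z : (P.complex.linearYonedaObj R M).cycles n) : P.complex.X n ⟶ M :=
  (P.complex.linearYonedaObj R M).iCycles n z

lemma d_comp_iCycles (z : (P.complex.linearYonedaObj R M).cycles n) :
    P.complex.d (n + 1) n ≫ cocycleOfCycles P M n z = 0 := by
  have := congrArg (fun g => g.hom z) ((P.complex.linearYonedaObj R M).iCycles_d n (n + 1))
  exact this

/-- The `Ext` class represented by a cycle of `Hom(P, M)`. -/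
def cyclesToExt : (P.complex.linearYonedaObj R M).cycles n →ₗ[R] Abelian.Ext X M n where
  toFun z := P.extMk (cocycleOfCycles P M n z) (n + 1) rfl (d_comp_iCycles P M n z)
  map_add' z w := by
    rw [add_extMk]
    congr 1
    exact map_add _ _ _
  map_smul' r z := by
    rw [Abelian.Ext.smul_eq_comp_mk₀, RingHom.id_apply, extMk_comp_mk₀]
    congr 1
    rw [Linear.comp_smul, Category.comp_id]
    exact map_smul _ _ _

lemma cyclesToExt_surjective : Function.Surjective (cyclesToExt P M n) := by
  intro α
  obtain ⟨f, hf, rfl⟩ := P.extMk_surjective α (n + 1) rfl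
  have hex : (ShortComplex.mk _ _ ((P.complex.linearYonedaObj R M).iCycles_d n (n + 1))).Exact :=
    ShortComplex.exact_of_f_is_kernel _
      ((P.complex.linearYonedaObj R M).cyclesIsKernel n (n + 1) (by simp))
  rw [ShortComplex.moduleCat_exact_iff] at hex
  obtain ⟨z, hz⟩ := hex f hf
  refine ⟨z, ?_⟩
  change P.extMk (cocycleOfCycles P M n z) (n + 1) rfl (d_comp_iCycles P M n z) = _
  congr 1

lemma cyclesToExt_eq_zero_iff (z : (P.complex.linearYonedaObj R M).cycles n) :
    cyclesToExt P M n z = 0 ↔ (P.complex.linearYonedaObj R M).homologyπ n z = 0 := by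
  let K := P.complex.linearYonedaObj R M
  have hex : (ShortComplex.mk _ _
      (K.toCycles_comp_homologyπ ((ComplexShape.up ℕ).prev n) n)).Exact :=
    ShortComplex.exact_of_g_is_cokernel _ (K.homologyIsCokernel _ n rfl)
  have hex' := (ShortComplex.moduleCat_exact_iff _).1 hex z
  refine (extMk_eq_zero_iff_exists_prev P n (cocycleOfCycles P M n z)
    (d_comp_iCycles P M n z)).trans ⟨fun ⟨g, hg⟩ => ?_, fun h => ?_⟩
  · have : z = K.toCycles ((ComplexShape.up ℕ).prev n) n g := by
      apply (ModuleCat.mono_iff_injective (K.iCycles n)).1 inferInstance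
      have := congrArg (fun q => q.hom g) (K.toCycles_i ((ComplexShape.up ℕ).prev n) n)
      exact hg.symm.trans this.symm
    rw [this]
    exact congrArg (fun q => q.hom g) (K.toCycles_comp_homologyπ ((ComplexShape.up ℕ).prev n) n)
  · obtain ⟨g, hg⟩ := hex' h
    refine ⟨g, ?_⟩
    have := congrArg (fun q => q.hom g) (K.toCycles_i ((ComplexShape.up ℕ).prev n) n)
    change P.complex.d _ _ ≫ g = K.iCycles n z
    rw [← hg]
    exact this.symm

/-- `Ext` computed as the cohomology of `Hom(P, M)` for a projective resolution `P`. -/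
def homologyEquivExt : (P.complex.linearYonedaObj R M).homology n ≃ₗ[R] Abelian.Ext X M n :=
  have hπ : Function.Surjective ((P.complex.linearYonedaObj R M).homologyπ n).hom :=
    (ModuleCat.epi_iff_surjective _).1 inferInstance
  (((P.complex.linearYonedaObj R M).homologyπ n).hom.quotKerEquivOfSurjective hπ).symm ≪≫ₗ
    Submodule.quotEquivOfEq _ _ (by
      ext z
      exact (cyclesToExt_eq_zero_iff P M n z).symm) ≪≫ₗ
    (cyclesToExt P M n).quotKerEquivOfSurjective (cyclesToExt_surjective P M n)

lemma homologyEquivExt_homologyπ (z : (P.complex.linearYonedaObj R M).cycles n) :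
    homologyEquivExt P M n ((P.complex.linearYonedaObj R M).homologyπ n z) =
      cyclesToExt P M n z := by
  have hπ : Function.Surjective ((P.complex.linearYonedaObj R M).homologyπ n).hom :=
    (ModuleCat.epi_iff_surjective _).1 inferInstance
  have : (((P.complex.linearYonedaObj R M).homologyπ n).hom.quotKerEquivOfSurjective hπ).symm
      ((P.complex.linearYonedaObj R M).homologyπ n z) = Submodule.Quotient.mk z := by
    rw [LinearEquiv.symm_apply_eq]
    rfl
  simp only [homologyEquivExt, LinearEquiv.trans_apply, this]
  rfl

lemma homologyEquivExt_naturality {X Y : ModuleCat.{u} R} (f : X ⟶ Y)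
    (P : ProjectiveResolution X) (Q : ProjectiveResolution Y) (φ : P.Hom Q f) (n : ℕ)
    (M : ModuleCat.{u} R) (x : (Q.complex.linearYonedaObj R M).homology n) :
    homologyEquivExt P M n (HomologicalComplex.homologyMap (linearYonedaObjMap φ.hom M) n x) =
      (Abelian.Ext.mk₀ f).comp (homologyEquivExt Q M n x) (zero_add n) := by
  obtain ⟨z, rfl⟩ : ∃ z, (Q.complex.linearYonedaObj R M).homologyπ n z = x :=
    (ModuleCat.epi_iff_surjective _).1 inferInstance x
  rw [homologyEquivExt_homologyπ]
  have h1 := congrArg (fun q => q.hom z)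
    (HomologicalComplex.homologyπ_naturality (linearYonedaObjMap φ.hom M) n)
  have h2 := congrArg (fun q => q.hom z)
    (HomologicalComplex.cyclesMap_i (linearYonedaObjMap φ.hom M) n)
  have h3 : HomologicalComplex.homologyMap (linearYonedaObjMap φ.hom M) n
      ((Q.complex.linearYonedaObj R M).homologyπ n z) =
      (P.complex.linearYonedaObj R M).homologyπ n
        (HomologicalComplex.cyclesMap (linearYonedaObjMap φ.hom M) n z) := h1
  rw [h3, homologyEquivExt_homologyπ]
  change P.extMk (cocycleOfCycles P M n _) (n + 1) rfl (d_comp_iCycles P M n _) =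
    (Abelian.Ext.mk₀ f).comp
      (Q.extMk (cocycleOfCycles Q M n z) (n + 1) rfl (d_comp_iCycles Q M n z)) _
  rw [mk₀_comp_extMk (φ := φ)]
  congr 1

/-- Comparison of the derived functor `Ext` with `Abelian.Ext`. -/
def extEquiv (N M : ModuleCat.{u} R) (n : ℕ) :
    ((Ext R (ModuleCat.{u} R) n).obj (op N)).obj M ≃ₗ[R] Abelian.Ext N M n :=
  ((projectiveResolution N).isoExt n M).toLinearEquiv ≪≫ₗ
    homologyEquivExt (projectiveResolution N) M n

lemma extEquiv_naturality {X Y : ModuleCat.{u} R} (f : X ⟶ Y) (M : ModuleCat.{u} R) (n : ℕ)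
    (x : ((Ext R (ModuleCat.{u} R) n).obj (op Y)).obj M) :
    extEquiv X M n (((Ext R (ModuleCat.{u} R) n).map f.op).app M x) =
      (Abelian.Ext.mk₀ f).comp (extEquiv Y M n x) (zero_add n) := by
  let P := projectiveResolution X
  let Q := projectiveResolution Y
  let φ : P.Hom Q f :=
    ⟨ProjectiveResolution.lift f P Q, ProjectiveResolution.lift_commutes_zero f P Q⟩
  have comm : φ.hom.f 0 ≫ Q.π.f 0 = P.π.f 0 ≫ f := φ.hom_f_zero_comp_π_f_zero
  have h1 := congrArg (fun q => q.hom x) (isoExt_naturality f P Q φ.hom comm n M)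
  exact (congrArg (homologyEquivExt P M n) h1).trans
    (homologyEquivExt_naturality f P Q φ n M _)

end ExtComparison

noncomputable section DirectLimitOfExt

variable {R : Type u} [CommRing R] (𝔞 : Ideal R)

/-- The module `R/𝔞^n`. -/
abbrev quotPow (n : ℕ) : ModuleCat.{u} R := ModuleCat.of R (R ⧸ 𝔞 ^ n)

/-- The projection `R/𝔞^m ⟶ R/𝔞^n` for `n ≤ m`. -/
def quotPowMap {n m : ℕ} (h : n ≤ m) : quotPow 𝔞 m ⟶ quotPow 𝔞 n :=
  ModuleCat.ofHom (Submodule.mapQ _ _ LinearMap.id (Ideal.pow_le_pow_right h))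

lemma quotPowMap_self (n : ℕ) : quotPowMap 𝔞 (le_refl n) = 𝟙 (quotPow 𝔞 n) := by
  ext
  rfl

lemma quotPowMap_comp {n m k : ℕ} (h : n ≤ m) (h' : m ≤ k) :
    quotPowMap 𝔞 h' ≫ quotPowMap 𝔞 h = quotPowMap 𝔞 (h.trans h') := by
  ext
  rfl

variable (M : ModuleCat.{u} R) (i : ℕ)

/-- The transition map `Ext^i(R/𝔞^n, M) → Ext^i(R/𝔞^m, M)` for `n ≤ m`. -/
def extTransition (n m : ℕ) (h : n ≤ m) :
    Abelian.Ext (quotPow 𝔞 n) M i →ₗ[R] Abelian.Ext (quotPow 𝔞 m) M i :=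
  (Abelian.Ext.mk₀ (quotPowMap 𝔞 h)).precompOfLinear R M (zero_add i)

lemma extTransition_apply {n m : ℕ} (h : n ≤ m) (x : Abelian.Ext (quotPow 𝔞 n) M i) :
    extTransition 𝔞 M i n m h x =
      (Abelian.Ext.mk₀ (quotPowMap 𝔞 h)).comp x (zero_add i) := rfl

instance : DirectedSystem (fun n => Abelian.Ext (quotPow 𝔞 n) M i)
    (fun n m h => extTransition 𝔞 M i n m h) where
  map_self n x := by
    rw [extTransition_apply, quotPowMap_self, Abelian.Ext.mk₀_id_comp]
  map_map n m k h h' x := by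
    rw [extTransition_apply, extTransition_apply, extTransition_apply,
      Abelian.Ext.mk₀_comp_mk₀_assoc, quotPowMap_comp]

/-- The direct limit of the modules `Ext^i(R/𝔞^n, M)`: a model of local cohomology in terms of
`Abelian.Ext`, which carries the long exact sequences. -/
abbrev ExtLimit : Type u :=
  Module.DirectLimit (fun n => Abelian.Ext (quotPow 𝔞 n) M i) (extTransition 𝔞 M i)

/-- The class in `ExtLimit 𝔞 M i` of an element of `Ext^i(R/𝔞^n, M)`. -/
abbrev toExtLimit (n : ℕ) : Abelian.Ext (quotPow 𝔞 n) M i →ₗ[R] ExtLimit 𝔞 M i :=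
  Module.DirectLimit.of R ℕ _ (extTransition 𝔞 M i) n

lemma toExtLimit_extTransition {n m : ℕ} (h : n ≤ m) (x : Abelian.Ext (quotPow 𝔞 n) M i) :
    toExtLimit 𝔞 M i m (extTransition 𝔞 M i n m h x) = toExtLimit 𝔞 M i n x :=
  Module.DirectLimit.of_f

lemma extTransition_extEquiv {n m : ℕ} (h : n ≤ m)
    (x : ((Ext R (ModuleCat.{u} R) i).obj (op (quotPow 𝔞 n))).obj M) :
    extTransition 𝔞 M i n m h (extEquiv _ M i x) = extEquiv (quotPow 𝔞 m) M i
      (((localCohomology.diagram (localCohomology.idealPowersDiagram 𝔞) i).map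
        (homOfLE h).op.op).app M x) :=
  (extEquiv_naturality (quotPowMap 𝔞 h) M i x).symm

/-- The cocone exhibiting local cohomology at `M` as a colimit of the modules `Ext^i(R/𝔞^n, M)`. -/
abbrev localCohomologyCocone :
    Limits.Cocone (localCohomology.diagram (localCohomology.idealPowersDiagram 𝔞) i ⋙
      (evaluation _ _).obj M) :=
  ((evaluation _ _).obj M).mapCocone
    (Limits.colimit.cocone (localCohomology.diagram (localCohomology.idealPowersDiagram 𝔞) i))

/-- The cocone `localCohomologyCocone` is colimiting, as evaluation preserves colimits. -/
def localCohomologyIsColimit : Limits.IsColimit (localCohomologyCocone 𝔞 M i) :=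
  Limits.isColimitOfPreserves _ (Limits.colimit.isColimit _)

/-- The structure map `Ext^i(R/𝔞^n, M) → H^i_𝔞(M)`. -/
def extToLocalCohomology (n : ℕ) :
    Abelian.Ext (quotPow 𝔞 n) M i →ₗ[R] (localCohomology 𝔞 i).obj M :=
  ((localCohomologyCocone 𝔞 M i).ι.app (op (op n))).hom ∘ₗ
    (extEquiv (quotPow 𝔞 n) M i).symm.toLinearMap

lemma extToLocalCohomology_extEquiv (n : ℕ)
    (x : ((Ext R (ModuleCat.{u} R) i).obj (op (quotPow 𝔞 n))).obj M) :
    extToLocalCohomology 𝔞 M i n (extEquiv _ M i x) =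
      ((localCohomologyCocone 𝔞 M i).ι.app (op (op n))).hom x :=
  congrArg ((localCohomologyCocone 𝔞 M i).ι.app (op (op n))).hom
    ((extEquiv _ M i).symm_apply_apply x)

lemma extToLocalCohomology_extTransition {n m : ℕ} (h : n ≤ m)
    (x : Abelian.Ext (quotPow 𝔞 n) M i) :
    extToLocalCohomology 𝔞 M i m (extTransition 𝔞 M i n m h x) =
      extToLocalCohomology 𝔞 M i n x := by
  obtain ⟨x, rfl⟩ := (extEquiv _ M i).surjective x
  rw [extTransition_extEquiv, extToLocalCohomology_extEquiv]
  exact (extToLocalCohomology_extEquiv 𝔞 M i m _).trans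
    (congrArg (fun q => q.hom x) ((localCohomologyCocone 𝔞 M i).w (homOfLE h).op.op))

instance preservesFilteredColimits_forget_moduleCat :
    Limits.PreservesFilteredColimitsOfSize.{0, 0} (forget (ModuleCat.{u} R)) :=
  Limits.preservesFilteredColimitsOfSize_shrink.{0, u, 0, u} _

lemma exists_extToLocalCohomology_eq (y : (localCohomology 𝔞 i).obj M) :
    ∃ n x, extToLocalCohomology 𝔞 M i n x = y := by
  obtain ⟨j, x, hx⟩ :=
    Limits.Concrete.isColimit_exists_rep _ (localCohomologyIsColimit 𝔞 M i) y
  exact ⟨j.unop.unop, extEquiv _ M i x, (extToLocalCohomology_extEquiv _ _ _ _ _).trans hx⟩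

lemma exists_extTransition_eq_zero {n : ℕ} {x : Abelian.Ext (quotPow 𝔞 n) M i}
    (hx : extToLocalCohomology 𝔞 M i n x = 0) : ∃ m h, extTransition 𝔞 M i n m h x = 0 := by
  obtain ⟨x, rfl⟩ := (extEquiv _ M i).surjective x
  rw [extToLocalCohomology_extEquiv] at hx
  obtain ⟨j, f, g, hf⟩ := Limits.Concrete.isColimit_exists_of_rep_eq _
    (D := localCohomologyCocone 𝔞 M i) (i := op (op n)) (j := op (op n))
    (localCohomologyIsColimit 𝔞 M i) x 0 (hx.trans (map_zero _).symm)
  refine ⟨j.unop.unop, f.unop.unop.le, ?_⟩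
  rw [extTransition_extEquiv]
  exact (congrArg _ (hf.trans (map_zero _))).trans (map_zero _)

/-- The map to local cohomology induced by the structure maps `extToLocalCohomology`. -/
def extLimitToLocalCohomology : ExtLimit 𝔞 M i →ₗ[R] (localCohomology 𝔞 i).obj M :=
  Module.DirectLimit.lift R ℕ _ _ (extToLocalCohomology 𝔞 M i)
    fun _ _ h => extToLocalCohomology_extTransition 𝔞 M i h

lemma extLimitToLocalCohomology_toExtLimit {n : ℕ} (x : Abelian.Ext (quotPow 𝔞 n) M i) :
    extLimitToLocalCohomology 𝔞 M i (toExtLimit 𝔞 M i n x) = extToLocalCohomology 𝔞 M i n x := by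
  rw [extLimitToLocalCohomology, Module.DirectLimit.lift_of]

lemma extLimitToLocalCohomology_bijective :
    Function.Bijective (extLimitToLocalCohomology 𝔞 M i) := by
  refine ⟨(injective_iff_map_eq_zero _).2 fun z hz => ?_, fun y => ?_⟩
  · obtain ⟨n, x, rfl⟩ := Module.DirectLimit.exists_of z
    rw [extLimitToLocalCohomology_toExtLimit] at hz
    obtain ⟨m, h, hx⟩ := exists_extTransition_eq_zero 𝔞 M i hz
    rw [← toExtLimit_extTransition 𝔞 M i h, hx, map_zero]
  · obtain ⟨n, x, rfl⟩ := exists_extToLocalCohomology_eq 𝔞 M i y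
    exact ⟨toExtLimit 𝔞 M i n x, extLimitToLocalCohomology_toExtLimit 𝔞 M i x⟩

/-- Local cohomology is the direct limit of the modules `Abelian.Ext (R/𝔞^n) M i`. -/
def extLimitEquiv : ExtLimit 𝔞 M i ≃ₗ[R] (localCohomology 𝔞 i).obj M :=
  LinearEquiv.ofBijective _ (extLimitToLocalCohomology_bijective 𝔞 M i)

end DirectLimitOfExt

section TorsionModules

variable {R : Type u} [CommRing R] {𝔞 : Ideal R} {M N : Type u} [AddCommGroup M] [Module R M]
  [AddCommGroup N] [Module R N]

lemma mem_primaryComponent_iff {m : M} :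
    m ∈ Ideal.primaryComponent M 𝔞 ↔ ∃ n : ℕ, ∀ a ∈ 𝔞 ^ n, a • m = 0 := by
  simp only [Ideal.primaryComponent_mem, Submodule.mem_torsionBySet_iff, SetLike.coe_sort_coe,
    Subtype.forall]

lemma isTorsionIdeal_iff_primaryComponent_eq_top :
    IsTorsionIdeal 𝔞 M ↔ Ideal.primaryComponent M 𝔞 = ⊤ := by
  simp only [Submodule.eq_top_iff', mem_primaryComponent_iff, IsTorsionIdeal]

lemma isTorsionIdeal_primaryComponent : IsTorsionIdeal 𝔞 (Ideal.primaryComponent M 𝔞) := by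
  rintro ⟨m, hm⟩
  obtain ⟨n, hn⟩ := mem_primaryComponent_iff.1 hm
  exact ⟨n, fun a ha => Subtype.ext (hn a ha)⟩

lemma IsTorsionIdeal.of_injective (h : IsTorsionIdeal 𝔞 N) (f : M →ₗ[R] N)
    (hf : Function.Injective f) : IsTorsionIdeal 𝔞 M := fun m => by
  obtain ⟨n, hn⟩ := h (f m)
  exact ⟨n, fun a ha => hf (by rw [map_smul, hn a ha, map_zero])⟩

lemma IsTorsionIdeal.of_surjective (h : IsTorsionIdeal 𝔞 M) (f : M →ₗ[R] N)
    (hf : Function.Surjective f) : IsTorsionIdeal 𝔞 N := fun m => by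
  obtain ⟨m, rfl⟩ := hf m
  obtain ⟨n, hn⟩ := h m
  exact ⟨n, fun a ha => by rw [← map_smul, hn a ha, map_zero]⟩

lemma exists_le_torsionBySet_pow_of_fg {P : Submodule R M} (hP : P.FG)
    (h : P ≤ Ideal.primaryComponent M 𝔞) :
    ∃ n : ℕ, P ≤ Submodule.torsionBySet R M ↑(𝔞 ^ n) := by
  have hcompact := (CompleteLattice.isCompactElement_iff_le_of_directed_sSup_le (Submodule R M) P).1
    ((Submodule.fg_iff_compact P).1 hP)
  have hmono : Monotone fun n : ℕ => Submodule.torsionBySet R M ↑(𝔞 ^ n) :=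
    fun i j hij => Submodule.torsionBySet_le_torsionBySet_pow i j hij 𝔞
  obtain ⟨_, ⟨n, rfl⟩, hn⟩ := hcompact _ (Set.range_nonempty _)
    hmono.directed_le.directedOn_range h
  exact ⟨n, hn⟩

lemma mem_primaryComponent_of_pow_smul_mem [IsNoetherianRing R] {m : M} {n : ℕ}
    (h : ∀ a ∈ 𝔞 ^ n, a • m ∈ Ideal.primaryComponent M 𝔞) : m ∈ Ideal.primaryComponent M 𝔞 := by
  obtain ⟨k, hk⟩ := exists_le_torsionBySet_pow_of_fg (𝔞 := 𝔞)
    (P := Submodule.map (LinearMap.toSpanSingleton R M m) (𝔞 ^ n))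
    (Submodule.FG.map _ (IsNoetherian.noetherian (𝔞 ^ n)))
    (Submodule.map_le_iff_le_comap.2 h)
  refine mem_primaryComponent_iff.2 ⟨k + n, fun c hc => ?_⟩
  rw [pow_add] at hc
  induction hc using Submodule.mul_induction_on' with
  | mem_mul_mem b hb a ha =>
    rw [mul_smul]
    exact (Submodule.mem_torsionBySet_iff _ _).1 (hk (Submodule.mem_map_of_mem ha)) ⟨b, hb⟩
  | add x _ y _ hx hy => rw [add_smul, hx, hy, add_zero]

lemma primaryComponent_quotient_primaryComponent [IsNoetherianRing R] :
    Ideal.primaryComponent (M ⧸ Ideal.primaryComponent M 𝔞) 𝔞 = ⊥ := by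
  refine eq_bot_iff.2 fun x hx => ?_
  obtain ⟨n, hn⟩ := mem_primaryComponent_iff.1 hx
  obtain ⟨m, rfl⟩ := Submodule.mkQ_surjective _ x
  refine (Submodule.Quotient.mk_eq_zero _).2
    (mem_primaryComponent_of_pow_smul_mem (n := n) fun a ha => ?_)
  rw [← Submodule.Quotient.mk_eq_zero]
  exact hn a ha

lemma torsionBySet_pow_eq_bot (h : Ideal.primaryComponent M 𝔞 = ⊥) (n : ℕ) :
    Submodule.torsionBySet R M ↑(𝔞 ^ n) = ⊥ :=
  eq_bot_iff.2 fun _ hm => h ▸ (Ideal.primaryComponent_mem M 𝔞 _).2 ⟨n, hm⟩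

lemma IsTorsionIdeal.exists_pow_inf_le_ker [IsNoetherianRing R] (hM : IsTorsionIdeal 𝔞 M)
    {J : Ideal R} (f : J →ₗ[R] M) : ∃ n : ℕ, ∀ r : J, (r : R) ∈ 𝔞 ^ n → f r = 0 := by
  obtain ⟨k, hk⟩ := exists_le_torsionBySet_pow_of_fg (𝔞 := 𝔞)
    (Module.Finite.iff_fg.1 (Module.Finite.range f))
    (isTorsionIdeal_iff_primaryComponent_eq_top.1 hM ▸ le_top)
  have hker : 𝔞 ^ k • (⊤ : Submodule R J) ≤ LinearMap.ker f := by
    refine Submodule.smul_le.2 fun a ha r _ => ?_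
    rw [LinearMap.mem_ker, map_smul]
    exact (Submodule.mem_torsionBySet_iff _ _).1 (hk (LinearMap.mem_range_self f r)) ⟨a, ha⟩
  obtain ⟨c, hc⟩ := Ideal.exists_pow_inf_eq_pow_smul 𝔞 (M := R) J
  refine ⟨k + c, fun r hr => ?_⟩
  have hmem : (r : R) ∈ 𝔞 ^ (k + c) • (⊤ : Submodule R R) ⊓ J := ⟨by simpa using hr, r.2⟩
  rw [hc _ (Nat.le_add_left _ _), Nat.add_sub_cancel] at hmem
  have hmap : (r : R) ∈ (𝔞 ^ k • (⊤ : Submodule R J)).map J.subtype := by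
    rw [Submodule.map_smul'', Submodule.map_top, Submodule.range_subtype]
    exact Submodule.smul_mono le_rfl inf_le_right hmem
  obtain ⟨r', hr', hrr'⟩ := hmap
  exact Subtype.ext hrr' ▸ hker hr'

lemma exists_smul_eq_of_injective [Module.Injective R M] {I J : Ideal R} (f : J →ₗ[R] M)
    (hf : ∀ r : J, (r : R) ∈ I → f r = 0) :
    ∃ e : M, (∀ a ∈ I, a • e = 0) ∧ ∀ r : J, (r : R) • e = f r := by
  let P : Submodule R J := Submodule.comap J.subtype I
  let ι : (J ⧸ P) →ₗ[R] R ⧸ I := Submodule.mapQ P I J.subtype le_rfl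
  have hι : Function.Injective ι := by
    rw [← LinearMap.ker_eq_bot, Submodule.ker_mapQ]
    exact Submodule.mkQ_map_self _
  obtain ⟨g, hg⟩ := Module.Injective.out ι hι (P.liftQ f hf)
  have hsmul (a : R) : a • g 1 = g (Ideal.Quotient.mk I a) := by
    rw [← map_smul, Algebra.smul_def, mul_one]
    rfl
  refine ⟨g 1, fun a ha => ?_, fun r => ?_⟩
  · rw [hsmul, Ideal.Quotient.eq_zero_iff_mem.2 ha, map_zero]
  · rw [hsmul]
    exact hg (P.mkQ r)

lemma injective_primaryComponent [IsNoetherianRing R] [Module.Injective R M] :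
    Module.Injective R (Ideal.primaryComponent M 𝔞) := by
  refine Module.Baer.injective fun J f => ?_
  obtain ⟨n, hn⟩ := isTorsionIdeal_primaryComponent.exists_pow_inf_le_ker f
  obtain ⟨e, he, hef⟩ := exists_smul_eq_of_injective ((Ideal.primaryComponent M 𝔞).subtype ∘ₗ f)
    fun r hr => congrArg Subtype.val (hn r hr)
  exact ⟨LinearMap.toSpanSingleton R _ ⟨e, mem_primaryComponent_iff.2 ⟨n, he⟩⟩,
    fun r hr => Subtype.ext (hef ⟨r, hr⟩)⟩

lemma injective_quotient_of_injective (P : Submodule R M) [Module.Injective R M]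
    [Module.Injective R P] : Module.Injective R (M ⧸ P) := by
  obtain ⟨p, hp⟩ := Module.Injective.out P.subtype P.injective_subtype LinearMap.id
  let e := P.quotientEquivOfIsCompl _ (LinearMap.isCompl_of_proj hp)
  refine ⟨fun X Y _ _ _ _ f hf g => ?_⟩
  obtain ⟨h, hh⟩ := Module.Injective.out f hf ((LinearMap.ker p).subtype ∘ₗ e.toLinearMap ∘ₗ g)
  refine ⟨P.mkQ ∘ₗ h, fun x => ?_⟩
  rw [LinearMap.comp_apply, hh]
  exact Submodule.mk_quotientEquivOfIsCompl_apply (LinearMap.isCompl_of_proj hp) (g x)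

variable (R M) in
lemma exists_embedding_injective : ∃ (E : ModuleCat.{u} R) (_ : Module.Injective R E)
    (f : M →ₗ[R] E), Function.Injective f := by
  have : CategoryTheory.Injective (Injective.under (ModuleCat.of R M)) :=
    Injective.injective_under (ModuleCat.of R M)
  exact ⟨Injective.under (ModuleCat.of R M), (Module.injective_iff_injective_object R
    (Injective.under (ModuleCat.of R M) : ModuleCat.{u} R)).2 this,
    (Injective.ι (ModuleCat.of R M)).hom, (ModuleCat.mono_iff_injective _).1 inferInstance⟩

lemma IsTorsionIdeal.exists_embedding_injective [IsNoetherianRing R] (h : IsTorsionIdeal 𝔞 M) :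
    ∃ (E : ModuleCat.{u} R) (_ : Module.Injective R E) (f : M →ₗ[R] E), Function.Injective f ∧
      IsTorsionIdeal 𝔞 E := by
  obtain ⟨E, _, f, hf⟩ := _root_.exists_embedding_injective R M
  refine ⟨ModuleCat.of R (Ideal.primaryComponent E 𝔞), injective_primaryComponent,
    f.codRestrict _ (fun m => ?_), fun x y hxy => hf (congrArg Subtype.val hxy),
    isTorsionIdeal_primaryComponent⟩
  obtain ⟨n, hn⟩ := h m
  exact mem_primaryComponent_iff.2 ⟨n, fun a ha => by rw [← map_smul, hn a ha, map_zero]⟩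

lemma exists_torsionFree_embedding_injective [IsNoetherianRing R]
    (h : Ideal.primaryComponent M 𝔞 = ⊥) :
    ∃ (E : ModuleCat.{u} R) (_ : Module.Injective R E) (f : M →ₗ[R] E), Function.Injective f ∧
      Ideal.primaryComponent E 𝔞 = ⊥ := by
  obtain ⟨E, _, f, hf⟩ := exists_embedding_injective R M
  have := injective_primaryComponent (𝔞 := 𝔞) (M := E)
  refine ⟨ModuleCat.of R (E ⧸ Ideal.primaryComponent E 𝔞), injective_quotient_of_injective _,
    (Ideal.primaryComponent E 𝔞).mkQ ∘ₗ f, ?_, primaryComponent_quotient_primaryComponent⟩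
  refine LinearMap.ker_eq_bot.1 (eq_bot_iff.2 fun x hx => h ▸ mem_primaryComponent_iff.2 ?_)
  obtain ⟨n, hn⟩ := mem_primaryComponent_iff.1 ((Submodule.Quotient.mk_eq_zero _).1
    (show Submodule.Quotient.mk (f x) = 0 from hx))
  exact ⟨n, fun a ha => hf (by rw [map_smul, hn a ha, map_zero])⟩

end TorsionModules

noncomputable section ExtSequence

variable {R : Type u} [CommRing R]

/-- The map `Ext^i(X, M) → Ext^i(X, M')` induced by `g : M ⟶ M'`. -/
def extPost {M M' : ModuleCat.{u} R} (g : M ⟶ M') (X : ModuleCat.{u} R) (i : ℕ) :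
    Abelian.Ext X M i →ₗ[R] Abelian.Ext X M' i :=
  (Abelian.Ext.mk₀ g).postcompOfLinear R X (add_zero i)

lemma extPost_apply {M M' : ModuleCat.{u} R} (g : M ⟶ M') (X : ModuleCat.{u} R) (i : ℕ)
    (x : Abelian.Ext X M i) : extPost g X i x = x.comp (Abelian.Ext.mk₀ g) (add_zero i) := rfl

lemma extPost_extPost {M M' M'' : ModuleCat.{u} R} (g : M ⟶ M') (g' : M' ⟶ M'')
    (X : ModuleCat.{u} R) (i : ℕ) (x : Abelian.Ext X M i) :
    extPost g' X i (extPost g X i x) = extPost (g ≫ g') X i x := by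
  simp only [extPost_apply]
  rw [Abelian.Ext.comp_assoc_of_second_deg_zero, Abelian.Ext.mk₀_comp_mk₀]

variable {S : ShortComplex (ModuleCat.{u} R)} (hS : S.ShortExact)

/-- The connecting homomorphism `Ext^i(X, S.X₃) → Ext^{i+1}(X, S.X₁)`. -/
def extDelta (X : ModuleCat.{u} R) (i : ℕ) :
    Abelian.Ext X S.X₃ i →ₗ[R] Abelian.Ext X S.X₁ (i + 1) :=
  hS.extClass.postcompOfLinear R X rfl

lemma extDelta_apply (X : ModuleCat.{u} R) (i : ℕ) (x : Abelian.Ext X S.X₃ i) :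
    extDelta hS X i x = x.comp hS.extClass rfl := rfl

include hS in
lemma exact_extPost (X : ModuleCat.{u} R) (i : ℕ) :
    Function.Exact (extPost S.f X i) (extPost S.g X i) := by
  intro x
  refine ⟨fun h => Abelian.Ext.covariant_sequence_exact₂ X hS x h, ?_⟩
  rintro ⟨y, rfl⟩
  rw [extPost_extPost, S.zero, extPost_apply, Abelian.Ext.mk₀_zero, Abelian.Ext.comp_zero]

lemma exact_extPost_extDelta (X : ModuleCat.{u} R) (i : ℕ) :
    Function.Exact (extPost S.g X i) (extDelta hS X i) := by
  intro x
  refine ⟨fun h => Abelian.Ext.covariant_sequence_exact₃ X hS x rfl h, ?_⟩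
  rintro ⟨y, rfl⟩
  rw [extPost_apply, extDelta_apply, Abelian.Ext.comp_assoc_of_second_deg_zero, hS.comp_extClass,
    Abelian.Ext.comp_zero]

lemma exact_extDelta_extPost (X : ModuleCat.{u} R) (i : ℕ) :
    Function.Exact (extDelta hS X i) (extPost S.f X (i + 1)) := by
  intro x
  refine ⟨fun h => Abelian.Ext.covariant_sequence_exact₁ X hS x h rfl, ?_⟩
  rintro ⟨y, rfl⟩
  rw [extPost_apply, extDelta_apply, Abelian.Ext.comp_assoc_of_third_deg_zero, hS.extClass_comp,
    Abelian.Ext.comp_zero]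

include hS in
lemma extPost_injective (X : ModuleCat.{u} R) : Function.Injective (extPost S.f X 0) := by
  have := hS.mono_f
  exact Abelian.Ext.postcomp_mk₀_injective_of_mono X S.f

variable (𝔞 : Ideal R)

lemma extPost_extTransition {M M' : ModuleCat.{u} R} (g : M ⟶ M') (i : ℕ) {n m : ℕ} (h : n ≤ m)
    (x : Abelian.Ext (quotPow 𝔞 n) M i) :
    extPost g _ i (extTransition 𝔞 M i n m h x) = extTransition 𝔞 M' i n m h (extPost g _ i x) := by
  rw [extPost_apply, extTransition_apply, extTransition_apply, extPost_apply,
    Abelian.Ext.comp_assoc_of_third_deg_zero]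

lemma extDelta_extTransition (i : ℕ) {n m : ℕ} (h : n ≤ m) (x : Abelian.Ext (quotPow 𝔞 n) S.X₃ i) :
    extDelta hS _ i (extTransition 𝔞 S.X₃ i n m h x) =
      extTransition 𝔞 S.X₁ (i + 1) n m h (extDelta hS _ i x) := by
  rw [extDelta_apply, extTransition_apply, extTransition_apply, extDelta_apply]
  exact Abelian.Ext.comp_assoc _ _ _ (zero_add i) rfl (by lia)

variable {M E : Type u} [AddCommGroup M] [Module R M] [AddCommGroup E] [Module R E]

/-- The sequence `0 → M → E → E/f(M) → 0` of a linear map `f : M → E`. -/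
abbrev rangeSequence (f : M →ₗ[R] E) : ShortComplex (ModuleCat.{u} R) :=
  ModuleCat.shortComplexOfCompEqZero f (LinearMap.range f).mkQ (LinearMap.range_mkQ_comp f)

lemma rangeSequence_shortExact {f : M →ₗ[R] E} (hf : Function.Injective f) :
    (rangeSequence f).ShortExact :=
  ModuleCat.shortComplex_shortExact _ (LinearMap.exact_map_mkQ_range f) hf
    (Submodule.mkQ_surjective _)

/-- The sequence `0 → P → M → M/P → 0` of a submodule `P` of `M`. -/
abbrev quotientSequence (P : Submodule R M) : ShortComplex (ModuleCat.{u} R) :=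
  ModuleCat.shortComplexOfCompEqZero P.subtype P.mkQ
    (LinearMap.exact_subtype_mkQ P).linearMap_comp_eq_zero

lemma quotientSequence_shortExact (P : Submodule R M) : (quotientSequence P).ShortExact :=
  ModuleCat.shortComplex_shortExact _ (LinearMap.exact_subtype_mkQ P) P.injective_subtype
    P.mkQ_surjective

lemma extDelta_surjective_of_injective [Module.Injective R S.X₂] (X : ModuleCat.{u} R) (i : ℕ) :
    Function.Surjective (extDelta hS X i) := by
  have : CategoryTheory.Injective S.X₂ :=
    (Module.injective_iff_injective_object R S.X₂).1 inferInstance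
  exact fun y => (exact_extDelta_extPost hS X i y).1 (Abelian.Ext.eq_zero_of_injective _)

end ExtSequence

noncomputable section ExtZero

variable {R : Type u} [CommRing R] (J : Ideal R) (M : ModuleCat.{u} R)

/-- The map `Ext^0(R/J, M) = Hom(R/J, M) → M` evaluating homomorphisms at `1`. -/
def extZeroEval : Abelian.Ext (ModuleCat.of R (R ⧸ J)) M 0 →ₗ[R] M :=
  LinearMap.applyₗ (1 : R ⧸ J) ∘ₗ ModuleCat.homLinearEquiv.toLinearMap ∘ₗ
    Abelian.Ext.linearEquiv₀.toLinearMap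

lemma extZeroEval_mk₀ (f : ModuleCat.of R (R ⧸ J) ⟶ M) :
    extZeroEval J M (Abelian.Ext.mk₀ f) = f (1 : R ⧸ J) := by
  have : Abelian.Ext.linearEquiv₀ (R := R) (Abelian.Ext.mk₀ f) = f := by
    rw [← Abelian.Ext.linearEquiv₀_symm_apply (R := R), LinearEquiv.apply_symm_apply]
  simp only [extZeroEval, LinearMap.comp_apply, LinearEquiv.coe_coe, this]
  rfl

lemma extZeroEval_injective : Function.Injective (extZeroEval J M) := fun x y hxy => by
  obtain ⟨f, rfl⟩ := (Abelian.Ext.mk₀_bijective _ _).2 x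
  obtain ⟨g, rfl⟩ := (Abelian.Ext.mk₀_bijective _ _).2 y
  rw [extZeroEval_mk₀, extZeroEval_mk₀] at hxy
  exact congrArg _ (ModuleCat.hom_ext (Submodule.linearMap_qext _ (LinearMap.ext_ring hxy)))

lemma range_extZeroEval :
    LinearMap.range (extZeroEval J M) = Submodule.torsionBySet R M J := by
  refine le_antisymm ?_ fun m hm => ?_
  · rintro _ ⟨x, rfl⟩
    obtain ⟨f, rfl⟩ := (Abelian.Ext.mk₀_bijective _ _).2 x
    refine (Submodule.mem_torsionBySet_iff _ _).2 fun a => ?_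
    rw [extZeroEval_mk₀, ← map_smul]
    refine (congrArg f ?_).trans (map_zero _)
    exact (Ideal.Quotient.eq_zero_iff_mem (I := J)).2 (J.mul_mem_right _ a.2)
  · let f : ModuleCat.of R (R ⧸ J) ⟶ M := ModuleCat.ofHom
      (J.liftQ (LinearMap.toSpanSingleton R M m) fun a ha =>
        (Submodule.mem_torsionBySet_iff _ _).1 hm ⟨a, ha⟩)
    exact ⟨Abelian.Ext.mk₀ f, (extZeroEval_mk₀ J M f).trans (one_smul R m)⟩

/-- The identification of `Ext^0(R/J, M)` with the submodule of elements of `M` killed by `J`. -/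
def extZeroEquiv :
    Abelian.Ext (ModuleCat.of R (R ⧸ J)) M 0 ≃ₗ[R] Submodule.torsionBySet R M J :=
  LinearEquiv.ofInjective _ (extZeroEval_injective J M) ≪≫ₗ
    LinearEquiv.ofEq _ _ (range_extZeroEval J M)

lemma extZeroEval_extPost {M' : ModuleCat.{u} R} (g : M ⟶ M')
    (x : Abelian.Ext (ModuleCat.of R (R ⧸ J)) M 0) :
    extZeroEval J M' (extPost g _ 0 x) = g (extZeroEval J M x) := by
  obtain ⟨f, rfl⟩ := (Abelian.Ext.mk₀_bijective _ _).2 x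
  rw [extPost_apply, Abelian.Ext.mk₀_comp_mk₀, extZeroEval_mk₀, extZeroEval_mk₀]
  rfl

lemma extZeroEval_extTransition (𝔞 : Ideal R) {n m : ℕ} (h : n ≤ m)
    (x : Abelian.Ext (quotPow 𝔞 n) M 0) :
    extZeroEval (𝔞 ^ m) M (extTransition 𝔞 M 0 n m h x) = extZeroEval (𝔞 ^ n) M x := by
  obtain ⟨f, rfl⟩ := (Abelian.Ext.mk₀_bijective _ _).2 x
  rw [extTransition_apply, Abelian.Ext.mk₀_comp_mk₀, extZeroEval_mk₀, extZeroEval_mk₀]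
  rfl

variable {J}

lemma extDelta_bijective_of_injective {S : ShortComplex (ModuleCat.{u} R)} (hS : S.ShortExact)
    [Module.Injective R S.X₂] (h : Submodule.torsionBySet R S.X₂ J = ⊥) (i : ℕ) :
    Function.Bijective (extDelta hS (ModuleCat.of R (R ⧸ J)) i) := by
  have : CategoryTheory.Injective S.X₂ :=
    (Module.injective_iff_injective_object R S.X₂).1 inferInstance
  have hsub (y : Abelian.Ext (ModuleCat.of R (R ⧸ J)) S.X₂ i) : y = 0 := by
    cases i with
    | zero =>
      have : Subsingleton (Submodule.torsionBySet R S.X₂ J) := by rw [h]; infer_instance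
      exact (extZeroEquiv J S.X₂).injective (Subsingleton.elim _ _)
    | succ i => exact Abelian.Ext.eq_zero_of_injective y
  refine ⟨(injective_iff_map_eq_zero _).2 fun x hx => ?_, extDelta_surjective_of_injective hS _ i⟩
  obtain ⟨y, rfl⟩ := (exact_extPost_extDelta hS _ i x).1 hx
  rw [hsub y, map_zero]

end ExtZero

noncomputable section LocalCohomologyTorsion

lemma directLimit_map_bijective {R ι : Type*} [Ring R] [Preorder ι] [DecidableEq ι] [Nonempty ι]
    [IsDirectedOrder ι] {G G' : ι → Type*} [∀ i, AddCommGroup (G i)] [∀ i, Module R (G i)]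
    [∀ i, AddCommGroup (G' i)] [∀ i, Module R (G' i)] {f : ∀ i j, i ≤ j → G i →ₗ[R] G j}
    {f' : ∀ i j, i ≤ j → G' i →ₗ[R] G' j} [DirectedSystem G' (f' · · ·)]
    (g : ∀ i, G i →ₗ[R] G' i) (hg : ∀ i j h, g j ∘ₗ f i j h = f' i j h ∘ₗ g i)
    (hker : ∀ i x, g i x = 0 → ∃ j h, f i j h x = 0)
    (hlift : ∀ i y, ∃ j h x, g j x = f' i j h y) :
    Function.Bijective (Module.DirectLimit.map g hg) := by
  refine ⟨(injective_iff_map_eq_zero _).2 fun z hz => ?_, fun w => ?_⟩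
  · obtain ⟨i, x, rfl⟩ := Module.DirectLimit.exists_of z
    rw [Module.DirectLimit.map_apply_of] at hz
    obtain ⟨j, hij, hj⟩ := Module.DirectLimit.of.zero_exact hz
    obtain ⟨k, hjk, hk⟩ := hker j (f i j hij x)
      ((LinearMap.congr_fun (hg i j hij) x).trans hj)
    rw [← Module.DirectLimit.of_f (hij := hij), ← Module.DirectLimit.of_f (hij := hjk), hk,
      map_zero]
  · obtain ⟨i, y, rfl⟩ := Module.DirectLimit.exists_of w
    obtain ⟨j, hij, x, hx⟩ := hlift i y
    exact ⟨Module.DirectLimit.of R ι G f j x, by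
      rw [Module.DirectLimit.map_apply_of, hx, Module.DirectLimit.of_f]⟩

variable {R : Type u} [CommRing R] {𝔞 : Ideal R}

lemma smul_ext_eq_zero {X M : ModuleCat.{u} R} {a : R} (ha : ∀ x : X, a • x = 0) {i : ℕ}
    (e : Abelian.Ext X M i) : a • e = 0 := by
  have hid : a • 𝟙 X = 0 := by
    ext x
    exact ha x
  rw [← Abelian.Ext.mk₀_id_comp e, ← Abelian.Ext.smul_comp, ← Abelian.Ext.mk₀_smul, hid,
    Abelian.Ext.mk₀_zero, Abelian.Ext.zero_comp]

lemma isTorsionIdeal_localCohomology (M : ModuleCat.{u} R) (i : ℕ) :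
    IsTorsionIdeal 𝔞 ((localCohomology 𝔞 i).obj M) := fun y => by
  obtain ⟨n, e, rfl⟩ := exists_extToLocalCohomology_eq 𝔞 M i y
  refine ⟨n, fun a ha => ?_⟩
  have hquot (x : quotPow 𝔞 n) : a • x = 0 := by
    obtain ⟨r, rfl⟩ := Ideal.Quotient.mk_surjective x
    exact Ideal.Quotient.eq_zero_iff_mem.2 (Ideal.mul_mem_right r _ ha)
  rw [← map_smul, smul_ext_eq_zero hquot, map_zero]

/-- Dimension shifting along `0 → S.X₁ → S.X₂ → S.X₃ → 0` with `S.X₂` injective and `𝔞`-torsion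
free. -/
def localCohomologyShiftEquiv {S : ShortComplex (ModuleCat.{u} R)} (hS : S.ShortExact)
    [Module.Injective R S.X₂] (h : Ideal.primaryComponent S.X₂ 𝔞 = ⊥) (i : ℕ) :
    (localCohomology 𝔞 i).obj S.X₃ ≃ₗ[R] (localCohomology 𝔞 (i + 1)).obj S.X₁ :=
  (extLimitEquiv 𝔞 S.X₃ i).symm ≪≫ₗ
    Module.DirectLimit.congr (f' := extTransition 𝔞 S.X₁ (i + 1))
      (fun n => LinearEquiv.ofBijective (extDelta hS (quotPow 𝔞 n) i)
        (extDelta_bijective_of_injective hS (torsionBySet_pow_eq_bot h n) i))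
      (fun _ _ h => LinearMap.ext fun x => extDelta_extTransition hS 𝔞 i h x) ≪≫ₗ
    extLimitEquiv 𝔞 S.X₁ (i + 1)

lemma exists_extTransition_eq_extPost {S : ShortComplex (ModuleCat.{u} R)} (hS : S.ShortExact)
    (h : IsTorsionIdeal 𝔞 S.X₂) {n : ℕ} (y : Abelian.Ext (quotPow 𝔞 n) S.X₃ 0) :
    ∃ m h z, extTransition 𝔞 S.X₃ 0 n m h y = extPost S.g (quotPow 𝔞 m) 0 z := by
  obtain ⟨e, he⟩ := hS.moduleCat_surjective_g (extZeroEval (𝔞 ^ n) S.X₃ y)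
  obtain ⟨k, hk⟩ := h e
  have hmem : e ∈ LinearMap.range (extZeroEval (𝔞 ^ max n k) S.X₂) :=
    range_extZeroEval _ S.X₂ ▸ (Submodule.mem_torsionBySet_iff _ _).2 fun a =>
      hk a (Ideal.pow_le_pow_right (le_max_right n k) a.2)
  obtain ⟨z, rfl⟩ := hmem
  refine ⟨max n k, le_max_left n k, z, extZeroEval_injective _ S.X₃ ?_⟩
  rw [extZeroEval_extTransition, extZeroEval_extPost]
  exact he.symm

lemma IsTorsionIdeal.exists_extDelta_eq [IsNoetherianRing R] {T : ModuleCat.{u} R}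
    (hT : IsTorsionIdeal 𝔞 T) {X : ModuleCat.{u} R} {i : ℕ} (x : Abelian.Ext X T (i + 1)) :
    ∃ (E : ModuleCat.{u} R) (f : T →ₗ[R] E) (hf : Function.Injective f)
      (y : Abelian.Ext X (rangeSequence f).X₃ i),
      IsTorsionIdeal 𝔞 E ∧ extDelta (rangeSequence_shortExact hf) X i y = x := by
  obtain ⟨E, _, f, hf, hE⟩ := hT.exists_embedding_injective
  have : Module.Injective R (rangeSequence f).X₂ := ‹Module.Injective R E›
  obtain ⟨y, hy⟩ := extDelta_surjective_of_injective (rangeSequence_shortExact hf) X i x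
  exact ⟨E, f, hf, y, hE, hy⟩

lemma IsTorsionIdeal.exists_extTransition_eq_zero [IsNoetherianRing R] {T : ModuleCat.{u} R}
    (hT : IsTorsionIdeal 𝔞 T) {i n : ℕ} (x : Abelian.Ext (quotPow 𝔞 n) T (i + 1)) :
    ∃ m h, extTransition 𝔞 T (i + 1) n m h x = 0 := by
  induction i generalizing T with
  | zero =>
    obtain ⟨E, f, hf, y, hE, rfl⟩ := hT.exists_extDelta_eq x
    have hS := rangeSequence_shortExact hf
    obtain ⟨m, h, z, hz⟩ := exists_extTransition_eq_extPost hS hE y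
    exact ⟨m, h, (extDelta_extTransition hS 𝔞 0 h y).symm.trans
      ((exact_extPost_extDelta hS _ 0 _).2 ⟨z, hz.symm⟩)⟩
  | succ i ih =>
    obtain ⟨E, f, hf, y, hE, rfl⟩ := hT.exists_extDelta_eq x
    obtain ⟨m, h, hm⟩ := ih (hE.of_surjective _ (LinearMap.range f).mkQ_surjective) y
    exact ⟨m, h, (extDelta_extTransition (rangeSequence_shortExact hf) 𝔞 _ h y).symm.trans
      ((congrArg _ hm).trans (map_zero _))⟩

/-- Local cohomology in positive degrees does not see an `𝔞`-torsion submodule of the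
coefficients. -/
def localCohomologyQuotientEquiv [IsNoetherianRing R] {M : Type u} [AddCommGroup M] [Module R M]
    {P : Submodule R M} (hP : IsTorsionIdeal 𝔞 P) (i : ℕ) :
    (localCohomology 𝔞 (i + 1)).obj (ModuleCat.of R M) ≃ₗ[R]
      (localCohomology 𝔞 (i + 1)).obj (ModuleCat.of R (M ⧸ P)) :=
  (extLimitEquiv 𝔞 _ (i + 1)).symm ≪≫ₗ LinearEquiv.ofBijective
    (Module.DirectLimit.map (fun n => extPost (quotientSequence P).g (quotPow 𝔞 n) (i + 1))
      fun _ _ h => LinearMap.ext fun x => extPost_extTransition 𝔞 _ _ h x)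
    (directLimit_map_bijective _ _
      (fun n x hx => by
        obtain ⟨y, rfl⟩ := (exact_extPost (quotientSequence_shortExact P) _ (i + 1) x).1 hx
        obtain ⟨m, h, hy⟩ := hP.exists_extTransition_eq_zero (T := ModuleCat.of R P) y
        exact ⟨m, h, (extPost_extTransition 𝔞 _ _ h y).symm.trans
          ((congrArg _ hy).trans (map_zero _))⟩)
      fun n y => by
        have hS := quotientSequence_shortExact P
        obtain ⟨m, h, hy⟩ :=
          hP.exists_extTransition_eq_zero (T := ModuleCat.of R P) (extDelta hS _ _ y)
        exact ⟨m, h, (exact_extPost_extDelta hS _ _ _).1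
          ((extDelta_extTransition hS 𝔞 _ h y).trans hy)⟩) ≪≫ₗ
    extLimitEquiv 𝔞 _ (i + 1)

variable (𝔞) in
/-- The evaluations `Hom(R/𝔞^n, M) → M` at `1`, in the limit. -/
def extLimitZeroEval (M : ModuleCat.{u} R) : ExtLimit 𝔞 M 0 →ₗ[R] M :=
  Module.DirectLimit.lift R ℕ _ _ (fun n => extZeroEval (𝔞 ^ n) M)
    fun _ _ h => extZeroEval_extTransition M 𝔞 h

lemma extLimitZeroEval_injective (M : ModuleCat.{u} R) :
    Function.Injective (extLimitZeroEval 𝔞 M) :=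
  Module.DirectLimit.lift_injective _ _ fun n => extZeroEval_injective (𝔞 ^ n) M

lemma range_extLimitZeroEval (M : ModuleCat.{u} R) :
    LinearMap.range (extLimitZeroEval 𝔞 M) = Ideal.primaryComponent M 𝔞 := by
  have hiff (m : M) : m ∈ LinearMap.range (extLimitZeroEval 𝔞 M) ↔
      ∃ n, m ∈ LinearMap.range (extZeroEval (𝔞 ^ n) M) := by
    refine ⟨?_, ?_⟩
    · rintro ⟨z, rfl⟩
      obtain ⟨n, x, rfl⟩ := Module.DirectLimit.exists_of z
      exact ⟨n, x, by rw [extLimitZeroEval, Module.DirectLimit.lift_of]⟩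
    · rintro ⟨n, x, rfl⟩
      exact ⟨toExtLimit 𝔞 M 0 n x, by rw [extLimitZeroEval, Module.DirectLimit.lift_of]⟩
  ext m
  simp only [hiff, range_extZeroEval, Ideal.primaryComponent_mem]

/-- `H^0_𝔞(M)` is the `𝔞`-torsion submodule of `M`. -/
def localCohomologyZeroEquiv (M : ModuleCat.{u} R) :
    (localCohomology 𝔞 0).obj M ≃ₗ[R] Ideal.primaryComponent M 𝔞 :=
  (extLimitEquiv 𝔞 M 0).symm ≪≫ₗ LinearEquiv.ofInjective _ (extLimitZeroEval_injective M) ≪≫ₗ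
    LinearEquiv.ofEq _ _ (range_extLimitZeroEval M)

end LocalCohomologyTorsion

section ExtFinite

variable {R : Type u} [CommRing R] {𝔞 : Ideal R}

variable (𝔞) in
/-- The `R`-module `Ext^i_R(R/𝔞, T)` is finitely generated. -/
def ExtFinite (i : ℕ) (T : Type u) [AddCommGroup T] [Module R T] : Prop :=
  Module.Finite R (Abelian.Ext (ModuleCat.of R (R ⧸ 𝔞)) (ModuleCat.of R T) i)

lemma extFinite_iff_finite_extIdeal {i : ℕ} {M : ModuleCat.{u} R} :
    ExtFinite 𝔞 i M ↔ Module.Finite R (extIdeal 𝔞 i M) :=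
  Module.Finite.equiv_iff (extEquiv (ModuleCat.of R (R ⧸ 𝔞)) M i).symm

variable {T : Type u} [AddCommGroup T] [Module R T]

lemma extFinite_zero_iff :
    ExtFinite 𝔞 0 T ↔ Module.Finite R (Submodule.torsionBySet R T 𝔞) :=
  Module.Finite.equiv_iff (extZeroEquiv 𝔞 (ModuleCat.of R T))

lemma ExtFinite.of_linearEquiv {T' : Type u} [AddCommGroup T'] [Module R T'] (e : T ≃ₗ[R] T')
    {i : ℕ} (h : ExtFinite 𝔞 i T) : ExtFinite 𝔞 i T' := by
  have : Module.Finite R (Abelian.Ext _ (ModuleCat.of R T) i) := h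
  refine Module.Finite.of_surjective (extPost (ModuleCat.ofHom e.toLinearMap) _ i) fun x =>
    ⟨extPost (ModuleCat.ofHom e.symm.toLinearMap) _ i x, ?_⟩
  have hid : ModuleCat.ofHom e.symm.toLinearMap ≫ ModuleCat.ofHom e.toLinearMap =
      𝟙 (ModuleCat.of R T') := ModuleCat.hom_ext (LinearMap.ext e.apply_symm_apply)
  rw [extPost_extPost, hid, extPost_apply, Abelian.Ext.comp_mk₀_id]

lemma finite_ker_extPost {S : ShortComplex (ModuleCat.{u} R)} (hS : S.ShortExact)
    {X : ModuleCat.{u} R} (h : ∀ i, Module.Finite R (Abelian.Ext X S.X₃ i)) (i : ℕ) :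
    Module.Finite R (LinearMap.ker (extPost S.f X i)) := by
  cases i with
  | zero =>
    rw [LinearMap.ker_eq_bot.2 (extPost_injective hS X)]
    infer_instance
  | succ i =>
    rw [LinearMap.exact_iff.1 (exact_extDelta_extPost hS X i)]
    infer_instance

variable [IsNoetherianRing R]

lemma ExtFinite.of_finite [Module.Finite R T] (i : ℕ) : ExtFinite 𝔞 i T :=
  ModuleCat.finite_ext R _ _ i

lemma module_finite_of_exact {A B C : Type*} [AddCommGroup A] [Module R A] [AddCommGroup B]
    [Module R B] [AddCommGroup C] [Module R C] [Module.Finite R A] [Module.Finite R C]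
    {f : A →ₗ[R] B} {g : B →ₗ[R] C} (h : Function.Exact f g) : Module.Finite R B :=
  have := isNoetherian_of_range_eq_ker f g h.linearMap_ker_eq.symm
  inferInstance

lemma finite_torsionBySet_mul {I J : Ideal R} (hI : Module.Finite R (Submodule.torsionBySet R T I))
    (hJ : Module.Finite R (Submodule.torsionBySet R T J)) :
    Module.Finite R (Submodule.torsionBySet R T ↑(I * J)) := by
  obtain ⟨s, hs⟩ := IsNoetherian.noetherian I
  have hspan : Submodule.torsionBySet R T I = Submodule.torsionBySet R T s :=
    hs ▸ (Submodule.torsionBySet_eq_torsionBySet_span _).symm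
  have hmem (a : s) (t : Submodule.torsionBySet R T ↑(I * J)) :
      (a : R) • (t : T) ∈ Submodule.torsionBySet R T J :=
    (Submodule.mem_torsionBySet_iff _ _).2 fun b => by
      rw [smul_comm, smul_smul]
      exact (Submodule.mem_torsionBySet_iff _ _).1 t.2
        ⟨a * b, Ideal.mul_mem_mul (hs ▸ Submodule.subset_span a.2) b.2⟩
  let φ : Submodule.torsionBySet R T ↑(I * J) →ₗ[R] s → Submodule.torsionBySet R T J :=
    LinearMap.pi fun a => ((LinearMap.lsmul R T a) ∘ₗ Submodule.subtype _).codRestrict _ (hmem a)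
  have hle : Submodule.torsionBySet R T I ≤ Submodule.torsionBySet R T ↑(I * J) :=
    Submodule.torsionBySet_le_torsionBySet_of_subset Ideal.mul_le_left
  refine module_finite_of_exact (f := Submodule.inclusion hle) (g := φ) fun t => ?_
  rw [← LinearMap.coe_range, Submodule.range_inclusion, SetLike.mem_coe, Submodule.mem_comap,
    hspan, Submodule.mem_torsionBySet_iff]
  exact ⟨fun h a => congrArg Subtype.val (congrFun h a), fun h => funext fun a => Subtype.ext (h a)⟩

lemma finite_torsionBySet_pow (h : Module.Finite R (Submodule.torsionBySet R T 𝔞)) (n : ℕ) :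
    Module.Finite R (Submodule.torsionBySet R T ↑(𝔞 ^ n)) := by
  induction n with
  | zero =>
    rw [pow_zero, Ideal.one_eq_top, Submodule.top_coe, Submodule.torsionBySet_univ]
    infer_instance
  | succ n ih =>
    rw [pow_succ]
    exact finite_torsionBySet_mul ih h

lemma ExtFinite.of_quotient (P : Submodule R T) {i : ℕ} (hP : ExtFinite 𝔞 i P)
    (hQ : ExtFinite 𝔞 i (T ⧸ P)) : ExtFinite 𝔞 i T := by
  unfold ExtFinite at *
  exact module_finite_of_exact (exact_extPost (quotientSequence_shortExact P) _ i)

lemma ExtFinite.quotient {P : Submodule R T} {i : ℕ} (hT : ExtFinite 𝔞 i T)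
    (hP : ExtFinite 𝔞 (i + 1) P) : ExtFinite 𝔞 i (T ⧸ P) := by
  unfold ExtFinite at *
  exact module_finite_of_exact (exact_extPost_extDelta (quotientSequence_shortExact P) _ i)

lemma ExtFinite.submodule_succ {P : Submodule R T} {i : ℕ} (hT : ExtFinite 𝔞 (i + 1) T)
    (hQ : ExtFinite 𝔞 i (T ⧸ P)) : ExtFinite 𝔞 (i + 1) P := by
  unfold ExtFinite at *
  exact module_finite_of_exact (exact_extDelta_extPost (quotientSequence_shortExact P) _ i)

lemma ExtFinite.submodule_zero {P : Submodule R T} (hT : ExtFinite 𝔞 0 T) : ExtFinite 𝔞 0 P :=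
  have : Module.Finite R (Abelian.Ext _ (ModuleCat.of R T) 0) := hT
  .of_injective _ (extPost_injective (quotientSequence_shortExact P) (ModuleCat.of R (R ⧸ 𝔞)))

/-- Melkersson's criterion. -/
lemma ExtFinite.of_ker_of_coker {x : R} (hx : x ∈ 𝔞)
    (hK : ∀ i, ExtFinite 𝔞 i (LinearMap.ker (LinearMap.lsmul R T x)))
    (hC : ∀ i, ExtFinite 𝔞 i (T ⧸ LinearMap.range (LinearMap.lsmul R T x))) (i : ℕ) :
    ExtFinite 𝔞 i T := by
  let μ := LinearMap.lsmul R T x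
  let π : ModuleCat.of R T ⟶ ModuleCat.of R (LinearMap.range μ) := ModuleCat.ofHom μ.rangeRestrict
  let ι : ModuleCat.of R (LinearMap.range μ) ⟶ ModuleCat.of R T :=
    ModuleCat.ofHom (LinearMap.range μ).subtype
  -- `π ≫ ι` is multiplication by `x`, which kills `Ext^i(R/𝔞, T)`
  have hzero (e : Abelian.Ext (ModuleCat.of R (R ⧸ 𝔞)) (ModuleCat.of R T) i) :
      extPost ι _ i (extPost π _ i e) = 0 := by
    have hπι : π ≫ ι = x • 𝟙 (ModuleCat.of R T) := rfl
    rw [extPost_extPost, hπι, extPost_apply, ← Abelian.Ext.smul_eq_comp_mk₀]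
    refine smul_ext_eq_zero (fun y => ?_) e
    obtain ⟨r, rfl⟩ := Ideal.Quotient.mk_surjective y
    exact Ideal.Quotient.eq_zero_iff_mem.2 (𝔞.mul_mem_right r hx)
  have : Module.Finite R (Abelian.Ext _ (ModuleCat.of R (LinearMap.ker μ)) i) := hK i
  have := finite_ker_extPost (quotientSequence_shortExact (LinearMap.range μ)) hC i
  have hexact : Function.Exact (LinearMap.ker μ).subtype μ.rangeRestrict :=
    LinearMap.exact_iff.2 (by rw [Submodule.range_subtype, LinearMap.ker_rangeRestrict])
  have hS := ModuleCat.shortComplex_shortExact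
    (ModuleCat.shortComplexOfCompEqZero _ _ hexact.linearMap_comp_eq_zero) hexact
    (LinearMap.ker μ).injective_subtype μ.surjective_rangeRestrict
  refine module_finite_of_exact (f := extPost (ModuleCat.ofHom (LinearMap.ker μ).subtype) _ i)
    (g := (extPost π _ i).codRestrict (LinearMap.ker (extPost ι _ i)) hzero) fun e => ?_
  rw [← exact_extPost hS _ i e, Subtype.ext_iff]
  rfl

end ExtFinite

section AssociatedPrimes

variable {R : Type u} [CommRing R] [IsNoetherianRing R] {𝔞 : Ideal R} {T : Type u}
  [AddCommGroup T] [Module R T]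

lemma mem_support_of_isAssociatedPrime {p : PrimeSpectrum R}
    (hp : IsAssociatedPrime p.asIdeal T) : p ∈ Module.support R T := by
  obtain ⟨-, t, ht⟩ := isAssociatedPrime_iff.1 hp
  refine Module.mem_support_iff'.2 ⟨t, fun r hr h => hr ?_⟩
  rw [ht]
  exact Submodule.mem_colon_singleton.2 h

lemma exists_isAssociatedPrime_le_of_mem_support {p : PrimeSpectrum R}
    (hp : p ∈ Module.support R T) : ∃ q, IsAssociatedPrime q T ∧ q ≤ p.asIdeal := by
  obtain ⟨t, ht⟩ := Module.mem_support_iff_exists_annihilator.1 hp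
  obtain ⟨q, hq, hqp⟩ := Ideal.exists_minimalPrimes_le ht
  exact ⟨q, IsAssociatedPrime.map_of_injective _
    (Module.associatedPrimes.minimalPrimes_annihilator_subset_associatedPrimes R _ hq)
    (Submodule.span R {t}).injective_subtype, hqp⟩

lemma isAssociatedPrime_of_minimal_support {p : PrimeSpectrum R}
    (hp : Minimal (· ∈ Module.support R T) p) : IsAssociatedPrime p.asIdeal T := by
  obtain ⟨q, hq, hqp⟩ := exists_isAssociatedPrime_le_of_mem_support hp.1
  have hpq : p.asIdeal ≤ q := hp.2 (y := ⟨q, hq.isPrime⟩) (mem_support_of_isAssociatedPrime hq) hqp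
  rwa [hpq.antisymm hqp]

lemma IsTorsionIdeal.le_of_isAssociatedPrime (hT : IsTorsionIdeal 𝔞 T) {p : Ideal R}
    (hp : IsAssociatedPrime p T) : 𝔞 ≤ p := by
  obtain ⟨hprime, t, ht⟩ := isAssociatedPrime_iff.1 hp
  obtain ⟨n, hn⟩ := hT t
  refine hprime.le_of_pow_le (n := n) fun a ha => ?_
  rw [ht]
  exact Submodule.mem_colon_singleton.2 (hn a ha)

lemma IsTorsionIdeal.finite_associatedPrimes (hT : IsTorsionIdeal 𝔞 T)
    (h : Module.Finite R (Submodule.torsionBySet R T 𝔞)) : (associatedPrimes R T).Finite := by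
  refine (associatedPrimes.finite R (Submodule.torsionBySet R T 𝔞)).subset fun p hp => ?_
  obtain ⟨hprime, t, ht⟩ := isAssociatedPrime_iff.1 hp
  have htmem : t ∈ Submodule.torsionBySet R T 𝔞 := (Submodule.mem_torsionBySet_iff _ _).2 fun a =>
    Submodule.mem_colon_singleton.1 (ht ▸ hT.le_of_isAssociatedPrime hp a.2)
  refine isAssociatedPrime_iff.2 ⟨hprime, ⟨t, htmem⟩, ?_⟩
  ext r
  rw [ht, Submodule.mem_colon_singleton, Submodule.mem_colon_singleton, Submodule.mem_bot,
    Submodule.mem_bot, Subtype.ext_iff]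
  rfl

lemma IsTorsionIdeal.finite_minimal_support (hT : IsTorsionIdeal 𝔞 T)
    (h : Module.Finite R (Submodule.torsionBySet R T 𝔞)) :
    {p | Minimal (· ∈ Module.support R T) p}.Finite :=
  ((hT.finite_associatedPrimes h).preimage (f := PrimeSpectrum.asIdeal)
    (fun _ _ _ _ => PrimeSpectrum.ext)).subset fun _ => isAssociatedPrime_of_minimal_support

lemma isTorsionIdeal_of_support_subset_zeroLocus
    (h : Module.support R T ⊆ PrimeSpectrum.zeroLocus (𝔞 : Set R)) : IsTorsionIdeal 𝔞 T := by
  intro t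
  have hsub : PrimeSpectrum.zeroLocus (Module.annihilator R (Submodule.span R {t}) : Set R) ⊆
      PrimeSpectrum.zeroLocus (𝔞 : Set R) :=
    Module.support_eq_zeroLocus (R := R) (M := Submodule.span R {t}) ▸
      (Module.support_subset_of_injective _ (Submodule.span R {t}).injective_subtype).trans h
  obtain ⟨n, hn⟩ := Ideal.exists_pow_le_of_le_radical_of_fg
    ((PrimeSpectrum.zeroLocus_subset_zeroLocus_iff _ _).1 hsub) (IsNoetherian.noetherian 𝔞)
  exact ⟨n, fun a ha => congrArg Subtype.val (Module.mem_annihilator.1 (hn ha)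
    ⟨t, Submodule.mem_span_singleton_self t⟩)⟩

end AssociatedPrimes

section Artinian

lemma exists_forall_ge_eq_of_antitone {α : Type*} [PartialOrder α] [WellFoundedLT α]
    {L : ℕ → ℕ → α} (hL : Antitone L) (hL' : ∀ n, Antitone (L n)) :
    ∃ N, ∀ n ≥ N, L n = L N := by
  obtain ⟨_, ⟨⟨a, b⟩, rfl⟩, hmin⟩ := exists_minimal_of_wellFoundedLT
    (· ∈ Set.range fun q : ℕ × ℕ => L q.1 q.2) ⟨_, (0, 0), rfl⟩
  have hstab {n k : ℕ} (hn : a ≤ n) (hk : b ≤ k) : L n k = L a b :=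
    have hle : L n k ≤ L a b := (hL hn k).trans (hL' a hk)
    hle.antisymm (hmin ⟨(n, k), rfl⟩ hle)
  have hcol (k : ℕ) : ∃ N, ∀ n ≥ N, L N k = L n k :=
    WellFoundedLT.antitone_chain_condition fun _ _ hnm => hL hnm k
  choose N hN using hcol
  refine ⟨max a ((Finset.range b).sup N), fun n hn => funext fun k => ?_⟩
  rcases le_or_gt b k with hk | hk
  · rw [hstab ((le_max_left _ _).trans hn) hk, hstab (le_max_left _ _) hk]
  · have hNk : N k ≤ max a ((Finset.range b).sup N) :=
      (Finset.le_sup (Finset.mem_range.2 hk)).trans (le_max_right _ _)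
    rw [← hN k n (hNk.trans hn), ← hN k _ hNk]

variable {A : Type u} [CommRing A] {T : Type u} [AddCommGroup T] [Module A T]

/-- The elements `x ^ k • t` with `t ∈ F` and `x ^ (k + 1) • t = 0`, inside the kernel of `x`
on `T`. Over all `k` these determine `F` among comparable submodules when `T` is `x`-torsion. -/
def powSocle (x : A) (F : Submodule A T) (k : ℕ) :
    Submodule A (LinearMap.ker (LinearMap.lsmul A T x)) :=
  ((F ⊓ LinearMap.ker (LinearMap.lsmul A T (x ^ (k + 1)))).map
    (LinearMap.lsmul A T (x ^ k))).comap (Submodule.subtype _)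

lemma mem_powSocle_iff {x : A} {F : Submodule A T} {k : ℕ} {z} :
    z ∈ powSocle x F k ↔ ∃ t ∈ F, x ^ (k + 1) • t = 0 ∧ x ^ k • t = z.1 := by
  simp only [powSocle, Submodule.mem_comap, Submodule.mem_map, Submodule.mem_inf,
    LinearMap.mem_ker, LinearMap.lsmul_apply, Submodule.subtype_apply, and_assoc]

lemma powSocle_mono (x : A) : Monotone (powSocle (T := T) x) := fun _ _ h _ =>
  Submodule.comap_mono (Submodule.map_mono (inf_le_inf_right _ h))

lemma powSocle_antitone (x : A) (F : Submodule A T) : Antitone (powSocle x F) := by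
  refine antitone_nat_of_succ_le fun k z hz => ?_
  obtain ⟨t, ht, h0, h⟩ := mem_powSocle_iff.1 hz
  exact mem_powSocle_iff.2 ⟨x • t, F.smul_mem x ht, by rw [smul_smul, ← pow_succ, h0],
    by rw [smul_smul, ← pow_succ, h]⟩

lemma le_of_powSocle_le {x : A} (hx : ∀ t : T, ∃ k : ℕ, x ^ k • t = 0) {F G : Submodule A T}
    (hGF : G ≤ F) (h : powSocle x F ≤ powSocle x G) : F ≤ G := by
  have hpow (k : ℕ) : ∀ t ∈ F, x ^ k • t = 0 → t ∈ G := by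
    induction k with
    | zero =>
      intro t _ h0
      rw [pow_zero, one_smul] at h0
      exact h0 ▸ G.zero_mem
    | succ k ih =>
      intro t ht h0
      have hz : x ^ k • t ∈ LinearMap.ker (LinearMap.lsmul A T x) := by
        rwa [LinearMap.mem_ker, LinearMap.lsmul_apply, smul_smul, ← pow_succ']
      obtain ⟨t', ht', -, h1⟩ := mem_powSocle_iff.1
        (h k (mem_powSocle_iff.2 ⟨t, ht, h0, rfl⟩ : ⟨_, hz⟩ ∈ powSocle x F k))
      exact (G.sub_mem_iff_left ht').1
        (ih (t - t') (F.sub_mem ht (hGF ht')) (by rw [smul_sub, h1, sub_self]))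
  exact fun t ht => (hx t).elim fun k => hpow k t ht

lemma isArtinian_of_isArtinian_ker_lsmul {x : A} (hx : ∀ t : T, ∃ k : ℕ, x ^ k • t = 0)
    [IsArtinian A (LinearMap.ker (LinearMap.lsmul A T x))] : IsArtinian A T := by
  refine monotone_stabilizes_iff_artinian.1 fun F => ?_
  have hF : Antitone fun n => OrderDual.ofDual (F n) := F.monotone
  obtain ⟨N, hN⟩ := exists_forall_ge_eq_of_antitone ((powSocle_mono x).comp_antitone hF)
    fun n => powSocle_antitone x _
  exact ⟨N, fun n hn => (le_of_powSocle_le hx (hF hn) (hN n hn).ge).antisymm (hF hn)⟩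

lemma IsTorsionIdeal.mono {I J : Ideal A} (hT : IsTorsionIdeal J T) (h : I ≤ J) :
    IsTorsionIdeal I T := fun t =>
  (hT t).imp fun n hn a ha => hn a (Ideal.pow_right_mono h n ha)

/-- Melkersson's theorem. -/
lemma IsTorsionIdeal.isArtinian_of_fg {I : Ideal A} (hI : I.FG) (hT : IsTorsionIdeal I T)
    (h : IsArtinian A (Submodule.torsionBySet A T I)) : IsArtinian A T := by
  induction I, hI using Submodule.fg_induction generalizing T with
  | singleton x =>
    have hx (t : T) : ∃ k : ℕ, x ^ k • t = 0 := by
      obtain ⟨k, hk⟩ := hT t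
      exact ⟨k, hk _ (Ideal.pow_mem_pow (Ideal.mem_span_singleton_self x) k)⟩
    have hker : Submodule.torsionBySet A T ↑(Ideal.span {x}) =
        LinearMap.ker (LinearMap.lsmul A T x) := Submodule.torsionBySet_ideal_span_singleton_eq x
    rw [hker] at h
    exact isArtinian_of_isArtinian_ker_lsmul hx
  | sup I J _ _ hI hJ =>
    refine hJ (hT.mono le_sup_right) (hI ((hT.mono le_sup_left).of_injective _
      (Submodule.injective_subtype _)) ?_)
    have hmem (t : Submodule.torsionBySet A (Submodule.torsionBySet A T J) I) :
        (t : T) ∈ Submodule.torsionBySet A T ↑(I ⊔ J) := by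
      refine (Submodule.mem_torsionBySet_iff _ _).2 fun ⟨a, ha⟩ => ?_
      obtain ⟨b, hb, c, hc, rfl⟩ := Submodule.mem_sup.1 ha
      have hbt : b • (t : T) = 0 :=
        congrArg Subtype.val ((Submodule.mem_torsionBySet_iff _ _).1 t.2 ⟨b, hb⟩)
      have hct : c • (t : T) = 0 := (Submodule.mem_torsionBySet_iff _ _).1 t.1.2 ⟨c, hc⟩
      rw [add_smul, hbt, hct, add_zero]
    exact isArtinian_of_injective
      (((Submodule.torsionBySet A T J).subtype ∘ₗ Submodule.subtype _).codRestrict _ hmem)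
      ((LinearMap.injective_codRestrict_iff _).2
        ((Submodule.injective_subtype _).comp (Submodule.injective_subtype _)))

lemma isArtinian_of_smul_eq_zero_of_isMaximal [Module.Finite A T] {m : Ideal A} [m.IsMaximal]
    (h : Module.IsTorsionBySet A T m) : IsArtinian A T := by
  let := h.module
  let := Ideal.Quotient.field m
  have : IsScalarTower A (A ⧸ m) T := h.isScalarTower
  have : Module.Finite (A ⧸ m) T := Module.Finite.of_restrictScalars_finite A _ _
  exact isArtinian_of_surjective_algebraMap (S := A) (R := A ⧸ m) Ideal.Quotient.mk_surjective

end Artinian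

section MinimalSupport

variable {R : Type u} [CommRing R] {T : Type u} [AddCommGroup T] [Module R T] {𝔞 : Ideal R}

lemma exists_smul_mem_torsionBySet (h𝔞 : 𝔞.FG) (S : Submonoid R) {t : T}
    (h : ∀ a ∈ 𝔞, ∃ s ∈ S, s • a • t = 0) : ∃ s ∈ S, s • t ∈ Submodule.torsionBySet R T 𝔞 := by
  simp only [Submodule.mem_torsionBySet_iff, SetLike.coe_sort_coe, Subtype.forall]
  induction 𝔞, h𝔞 using Submodule.fg_induction with
  | singleton x =>
    obtain ⟨s, hs, h⟩ := h x (Submodule.mem_span_singleton_self x)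
    refine ⟨s, hs, fun a ha => ?_⟩
    obtain ⟨c, rfl⟩ := Submodule.mem_span_singleton.1 ha
    rw [smul_eq_mul, mul_smul, smul_comm x, h, smul_zero]
  | sup I J _ _ hI hJ =>
    obtain ⟨s, hs, hsI⟩ := hI fun a ha => h a (Ideal.mem_sup_left ha)
    obtain ⟨s', hs', hsJ⟩ := hJ fun a ha => h a (Ideal.mem_sup_right ha)
    refine ⟨s * s', S.mul_mem hs hs', fun a ha => ?_⟩
    obtain ⟨b, hb, c, hc, rfl⟩ := Submodule.mem_sup.1 ha
    have hb0 : b • (s * s') • t = 0 := by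
      rw [mul_comm s, mul_smul, smul_comm b, hsI b hb, smul_zero]
    have hc0 : c • (s * s') • t = 0 := by rw [mul_smul, smul_comm c, hsJ c hc, smul_zero]
    rw [add_smul, hb0, hc0, add_zero]

lemma torsionBySet_map_localizedModule_le (h𝔞 : 𝔞.FG) (S : Submonoid R) :
    Submodule.torsionBySet (Localization S) (LocalizedModule S T)
        (𝔞.map (algebraMap R (Localization S))) ≤
      (Submodule.torsionBySet R T 𝔞).localized S := by
  intro z hz
  obtain ⟨⟨t, u⟩, rfl⟩ := IsLocalizedModule.mk'_surjective S (LocalizedModule.mkLinearMap S T) z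
  obtain ⟨s, hs, hst⟩ := exists_smul_mem_torsionBySet (t := t) h𝔞 S fun a ha => by
    have haz := (Submodule.mem_torsionBySet_iff _ _).1 hz ⟨_, Ideal.mem_map_of_mem _ ha⟩
    obtain ⟨s, hs⟩ := (IsLocalizedModule.mk'_eq_zero' (LocalizedModule.mkLinearMap S T) u).1 <|
      (IsLocalizedModule.mk'_smul (LocalizedModule.mkLinearMap S T) a t u).trans
        ((algebraMap_smul (Localization S) a _).symm.trans haz)
    exact ⟨s, s.2, hs⟩
  exact ⟨s • t, hst, ⟨s, hs⟩ * u,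
    IsLocalizedModule.mk'_cancel_left (LocalizedModule.mkLinearMap S T) t ⟨s, hs⟩ u⟩

lemma eventually_notMem_support_quotient_of_isArtinian {p : PrimeSpectrum R}
    [IsArtinian (Localization.AtPrime p.asIdeal) (LocalizedModule p.asIdeal.primeCompl T)] (x : R) :
    ∀ᶠ n in Filter.atTop, p ∉ Module.support R (T ⧸ (LinearMap.range (LinearMap.lsmul R T (x ^ n)) ⊔
      LinearMap.ker (LinearMap.lsmul R T (x ^ n)))) := by
  let A := Localization.AtPrime p.asIdeal
  let f := LocalizedModule.mkLinearMap p.asIdeal.primeCompl T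
  filter_upwards [(algebraMap A (Module.End A (LocalizedModule p.asIdeal.primeCompl T))
    (algebraMap R A x)).eventually_codisjoint_ker_pow_range_pow] with n hn
  rw [sup_comm]
  simp only [← map_pow] at hn
  refine Module.notMem_support_iff'.2 fun q => ?_
  obtain ⟨t, rfl⟩ := Submodule.mkQ_surjective _ q
  obtain ⟨z, hz, _, ⟨w, rfl⟩, hzw⟩ := Submodule.mem_sup.1
    (codisjoint_iff.1 hn ▸ Submodule.mem_top : f t ∈ _)
  obtain ⟨⟨t', s⟩, hs⟩ := IsLocalizedModule.surj p.asIdeal.primeCompl f w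
  rw [LinearMap.mem_ker, Module.algebraMap_end_apply, algebraMap_smul] at hz
  rw [Module.algebraMap_end_apply, algebraMap_smul] at hzw
  have hzero : f (x ^ n • ((s : R) • t - x ^ n • t')) = 0 := by
    have hst : f ((s : R) • t - x ^ n • t') = (s : R) • z := by
      rw [map_sub, map_smul, map_smul, ← hs, ← hzw, smul_add, Submonoid.smul_def,
        smul_comm (x ^ n), add_sub_cancel_right]
    rw [map_smul, hst, smul_comm, hz, smul_zero]
  obtain ⟨u, hu⟩ := (IsLocalizedModule.eq_zero_iff p.asIdeal.primeCompl f).1 hzero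
  have hsplit : ((u : R) * s) • t =
      (u : R) • ((s : R) • t - x ^ n • t') + x ^ n • (u : R) • t' := by
    rw [smul_sub, smul_smul, smul_comm (x ^ n), sub_add_cancel]
  have hmem : ((u : R) * s) • t ∈ LinearMap.ker (LinearMap.lsmul R T (x ^ n)) ⊔
      LinearMap.range (LinearMap.lsmul R T (x ^ n)) := by
    rw [hsplit]
    refine Submodule.add_mem_sup ?_ ⟨(u : R) • t', rfl⟩
    rw [LinearMap.mem_ker, LinearMap.lsmul_apply, smul_comm]
    exact hu
  exact ⟨u * s, p.asIdeal.primeCompl.mul_mem u.2 s.2, (Submodule.Quotient.mk_eq_zero _).2 hmem⟩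

variable [IsNoetherianRing R] {p : PrimeSpectrum R}

lemma support_localizedModule_subset_of_minimal (hp : Minimal (· ∈ Module.support R T) p) :
    Module.support (Localization.AtPrime p.asIdeal) (LocalizedModule p.asIdeal.primeCompl T) ⊆
      {IsLocalRing.closedPoint (Localization.AtPrime p.asIdeal)} := by
  intro q hq
  have : IsNoetherianRing (Localization.AtPrime p.asIdeal) :=
    IsLocalization.isNoetherianRing p.asIdeal.primeCompl _ inferInstance
  obtain ⟨r, hr, hrq⟩ := exists_isAssociatedPrime_le_of_mem_support hq
  have hrprime := hr.isPrime
  have hcomap : IsAssociatedPrime (r.comap (algebraMap R _)) T :=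
    Module.associatedPrimes.comap_mem_associatedPrimes_of_mem_associatedPrimes_of_isLocalizedModule_of_fg
      p.asIdeal.primeCompl (LocalizedModule.mkLinearMap p.asIdeal.primeCompl T) r hr
      (IsNoetherian.noetherian _)
  have hle : r.comap (algebraMap R _) ≤ p.asIdeal :=
    (Ideal.comap_mono (IsLocalRing.le_maximalIdeal hrprime.ne_top)).trans
      (Localization.AtPrime.under_maximalIdeal).le
  have hge : p.asIdeal ≤ r.comap (algebraMap R _) :=
    hp.2 (y := ⟨_, hcomap.isPrime⟩) (mem_support_of_isAssociatedPrime hcomap) hle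
  have hmr : IsLocalRing.maximalIdeal (Localization.AtPrime p.asIdeal) ≤ r :=
    Localization.AtPrime.map_eq_maximalIdeal (I := p.asIdeal) ▸ Ideal.map_le_iff_le_comap.2 hge
  exact PrimeSpectrum.ext
    ((IsLocalRing.le_maximalIdeal q.2.ne_top).antisymm (hmr.trans hrq))

lemma IsTorsionIdeal.isArtinian_localizedModule_of_minimal (hT : IsTorsionIdeal 𝔞 T)
    (h : Module.Finite R (Submodule.torsionBySet R T 𝔞))
    (hp : Minimal (· ∈ Module.support R T) p) :
    IsArtinian (Localization.AtPrime p.asIdeal) (LocalizedModule p.asIdeal.primeCompl T) := by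
  let A := Localization.AtPrime p.asIdeal
  let m := IsLocalRing.maximalIdeal A
  have : IsNoetherianRing A := IsLocalization.isNoetherianRing p.asIdeal.primeCompl _ inferInstance
  have htorsion : IsTorsionIdeal m (LocalizedModule p.asIdeal.primeCompl T) :=
    isTorsionIdeal_of_support_subset_zeroLocus
      ((support_localizedModule_subset_of_minimal hp).trans (Set.singleton_subset_iff.2
        ((PrimeSpectrum.mem_zeroLocus _ _).2 subset_rfl)))
  have hmap : 𝔞.map (algebraMap R A) ≤ m :=
    (Ideal.map_mono (hT.le_of_isAssociatedPrime (isAssociatedPrime_of_minimal_support hp))).trans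
      Localization.AtPrime.map_eq_maximalIdeal.le
  have hsocle := (Submodule.torsionBySet_le_torsionBySet_of_subset hmap).trans
    (torsionBySet_map_localizedModule_le (T := T) (IsNoetherian.noetherian 𝔞) p.asIdeal.primeCompl)
  have hfin : Module.Finite A ((Submodule.torsionBySet R T 𝔞).localized p.asIdeal.primeCompl) :=
    Module.Finite.iff_fg.2 (Submodule.localized_fg _ (Module.Finite.iff_fg.1 h))
  have := Module.Finite.of_injective _ (Submodule.inclusion_injective hsocle)
  exact htorsion.isArtinian_of_fg (IsNoetherian.noetherian m)
    (isArtinian_of_smul_eq_zero_of_isMaximal (m := m) (Submodule.torsionBySet_isTorsionBySet _))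

lemma IsTorsionIdeal.eventually_forall_minimal_notMem_support_quotient (hT : IsTorsionIdeal 𝔞 T)
    (h : Module.Finite R (Submodule.torsionBySet R T 𝔞)) (x : R) :
    ∀ᶠ n in Filter.atTop, ∀ p, Minimal (· ∈ Module.support R T) p →
      p ∉ Module.support R (T ⧸ (LinearMap.range (LinearMap.lsmul R T (x ^ n)) ⊔
        LinearMap.ker (LinearMap.lsmul R T (x ^ n)))) :=
  (Filter.eventually_all_finite (hT.finite_minimal_support h)).2 fun _ hp =>
    have := hT.isArtinian_localizedModule_of_minimal h hp
    eventually_notMem_support_quotient_of_isArtinian x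

end MinimalSupport

section ModuleDim

variable {R : Type u} [CommRing R] {T T' : Type u} [AddCommGroup T] [Module R T]
  [AddCommGroup T'] [Module R T']

lemma moduleDim_le_of_support_subset (h : Module.support R T' ⊆ Module.support R T) :
    moduleDim R T' ≤ moduleDim R T :=
  Order.krullDim_le_of_strictMono (Set.inclusion h) fun _ _ hlt => hlt

lemma moduleDim_le_of_injective (f : T' →ₗ[R] T) (hf : Function.Injective f) :
    moduleDim R T' ≤ moduleDim R T :=
  moduleDim_le_of_support_subset (Module.support_subset_of_injective f hf)

lemma subsingleton_of_moduleDim_lt_zero (h : moduleDim R T < ((0 : ℕ) : WithBot ℕ∞)) :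
    Subsingleton T := by
  rw [← Module.support_eq_empty_iff (R := R), Set.eq_empty_iff_forall_notMem]
  exact fun p hp => absurd (Order.krullDim_lt_coe_iff.1 h (RelSeries.singleton _ ⟨p, hp⟩))
    (Nat.not_lt_zero _)

lemma moduleDim_lt_of_forall_minimal_notMem {d : ℕ}
    (h : moduleDim R T < ((d + 1 : ℕ) : WithBot ℕ∞))
    (hsub : Module.support R T' ⊆ Module.support R T)
    (hmin : ∀ p, Minimal (· ∈ Module.support R T) p → p ∉ Module.support R T') :
    moduleDim R T' < d := by
  refine Order.krullDim_lt_coe_iff.2 fun s => ?_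
  obtain ⟨q, hq, hlt⟩ : ∃ q ∈ Module.support R T, q < s.head.1 := by
    by_contra! hcon
    exact hmin s.head.1 ⟨hsub s.head.2, fun q hq hle => (hle.eq_of_not_lt (hcon q hq)).ge⟩ s.head.2
  let s' : LTSeries (Module.support R T) := s.map (Set.inclusion hsub) fun _ _ h => h
  have hlt' : (⟨q, hq⟩ : Module.support R T) < s'.head := hlt
  have hlen : s'.length + 1 < d + 1 :=
    RelSeries.cons_length s' ⟨q, hq⟩ hlt' ▸ Order.krullDim_lt_coe_iff.1 h (s'.cons ⟨q, hq⟩ hlt')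
  exact Nat.lt_of_succ_lt_succ hlen

end ModuleDim

section FiniteExtBelow

variable {R : Type u} [CommRing R] [IsNoetherianRing R] {𝔞 : Ideal R} {T : Type u}
  [AddCommGroup T] [Module R T]

lemma ExtFinite.range {T' : Type u} [AddCommGroup T'] [Module R T'] {φ : T →ₗ[R] T'} {i : ℕ}
    (hT : ExtFinite 𝔞 i T) (hK : ExtFinite 𝔞 (i + 1) (LinearMap.ker φ)) :
    ExtFinite 𝔞 i (LinearMap.range φ) :=
  (hT.quotient hK).of_linearEquiv φ.quotKerEquivRange

lemma ExtFinite.ker_succ {T' : Type u} [AddCommGroup T'] [Module R T'] {φ : T →ₗ[R] T'} {i : ℕ}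
    (hT : ExtFinite 𝔞 (i + 1) T) (hR : ExtFinite 𝔞 i (LinearMap.range φ)) :
    ExtFinite 𝔞 (i + 1) (LinearMap.ker φ) :=
  hT.submodule_succ (hR.of_linearEquiv φ.quotKerEquivRange.symm)

lemma extFinite_map_mkQ_ker_lsmul {y : R}
    (hK : ∀ i, ExtFinite 𝔞 i (LinearMap.ker (LinearMap.lsmul R T y)))
    (hK₂ : ∀ i, ExtFinite 𝔞 i (LinearMap.ker (LinearMap.lsmul R T (y ^ 2)))) (i : ℕ) :
    ExtFinite 𝔞 i ((LinearMap.ker (LinearMap.lsmul R T y)).map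
      (LinearMap.range (LinearMap.lsmul R T y)).mkQ) := by
  let μ := LinearMap.lsmul R T y
  let μ₂ := LinearMap.lsmul R T (y ^ 2)
  have hmem (t : T) : t ∈ LinearMap.ker μ₂ ↔ μ t ∈ LinearMap.ker μ := by
    rw [LinearMap.mem_ker, LinearMap.mem_ker, LinearMap.lsmul_apply, pow_two, mul_smul]
    rfl
  have hle : LinearMap.ker μ ≤ LinearMap.ker μ₂ := fun t ht => (hmem t).2 (by
    rw [LinearMap.mem_ker.1 ht]
    exact zero_mem _)
  let ψ : LinearMap.ker μ₂ →ₗ[R] LinearMap.ker μ := μ.restrict fun t => (hmem t).1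
  let φ : LinearMap.ker μ →ₗ[R] T ⧸ LinearMap.range μ :=
    (LinearMap.range μ).mkQ ∘ₗ (LinearMap.ker μ).subtype
  have hψ : LinearMap.ker ψ = (LinearMap.ker μ).comap (LinearMap.ker μ₂).subtype := by
    ext t
    exact Subtype.ext_iff
  have hφ : LinearMap.ker φ = LinearMap.range ψ := by
    ext k
    refine (Submodule.Quotient.mk_eq_zero _).trans ⟨?_, ?_⟩
    · rintro ⟨t, ht⟩
      exact ⟨⟨t, (hmem t).2 (ht ▸ k.2)⟩, Subtype.ext ht⟩
    · rintro ⟨t, rfl⟩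
      exact ⟨t, rfl⟩
  have hφ_fin (i) : ExtFinite 𝔞 i (LinearMap.ker φ) := by
    rw [hφ]
    refine (hK₂ i).range ?_
    rw [hψ]
    exact (hK (i + 1)).of_linearEquiv (Submodule.comapSubtypeEquivOfLe hle).symm
  have hrange : LinearMap.range φ = (LinearMap.ker μ).map (LinearMap.range μ).mkQ := by
    rw [LinearMap.range_comp, Submodule.range_subtype]
  exact hrange ▸ (hK i).range (hφ_fin (i + 1))

variable (𝔞) in
/-- An `𝔞`-torsion module of dimension less than `d` whose modules `Ext^i_R(R/𝔞, T)` are finitely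
generated for `i < d`: the hypotheses of the cofiniteness criterion `FiniteExtBelow.extFinite`. -/
structure FiniteExtBelow (d : ℕ) (T : Type u) [AddCommGroup T] [Module R T] : Prop where
  isTorsionIdeal : IsTorsionIdeal 𝔞 T
  moduleDim_lt : moduleDim R T < d
  extFinite_of_lt : ∀ i < d, ExtFinite 𝔞 i T

variable {d : ℕ}

lemma FiniteExtBelow.ker (hd : d ≤ 2) (h : FiniteExtBelow 𝔞 d T) (φ : T →ₗ[R] T) :
    FiniteExtBelow 𝔞 d (LinearMap.ker φ) where
  isTorsionIdeal := h.isTorsionIdeal.of_injective _ (LinearMap.ker φ).injective_subtype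
  moduleDim_lt :=
    (moduleDim_le_of_injective _ (LinearMap.ker φ).injective_subtype).trans_lt h.moduleDim_lt
  extFinite_of_lt i hi := by
    have h0 : ExtFinite 𝔞 0 T := h.extFinite_of_lt 0 (i.zero_le.trans_lt hi)
    obtain rfl | rfl : i = 0 ∨ i = 1 := by lia
    · exact h0.submodule_zero
    · exact (h.extFinite_of_lt 1 hi).ker_succ h0.submodule_zero

lemma FiniteExtBelow.extFinite_of_ker_pow (h : FiniteExtBelow 𝔞 (d + 1) T) {x : R} (hx : x ∈ 𝔞)
    (hK : ∀ n i, ExtFinite 𝔞 i (LinearMap.ker (LinearMap.lsmul R T (x ^ n))))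
    (H : ∀ (S : Type u) [AddCommGroup S] [Module R S], FiniteExtBelow 𝔞 d S →
      ∀ i, ExtFinite 𝔞 i S) (i : ℕ) : ExtFinite 𝔞 i T := by
  obtain ⟨n, hn, hpos⟩ := ((h.isTorsionIdeal.eventually_forall_minimal_notMem_support_quotient
    (extFinite_zero_iff.1 (h.extFinite_of_lt 0 d.succ_pos)) x).and
      (Filter.eventually_gt_atTop 0)).exists
  let μ := LinearMap.lsmul R T (x ^ n)
  let K := (LinearMap.ker μ).map (LinearMap.range μ).mkQ
  have hKmap : ∀ i, ExtFinite 𝔞 i K :=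
    extFinite_map_mkQ_ker_lsmul (hK n) fun i => pow_mul x n 2 ▸ hK (n * 2) i
  have hcoker (i) (hi : i < d) : ExtFinite 𝔞 i (T ⧸ LinearMap.range μ) :=
    (h.extFinite_of_lt i (hi.trans d.lt_succ_self)).quotient
      ((h.extFinite_of_lt (i + 1) (Nat.succ_lt_succ hi)).range (hK n (i + 2)))
  have hsupp : Module.support R ((T ⧸ LinearMap.range μ) ⧸ K) =
      Module.support R (T ⧸ (LinearMap.range μ ⊔ LinearMap.ker μ)) :=
    (Submodule.quotientQuotientEquivQuotientSup _ _).support_eq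
  have hquot : FiniteExtBelow 𝔞 d ((T ⧸ LinearMap.range μ) ⧸ K) :=
    { isTorsionIdeal := (h.isTorsionIdeal.of_surjective _ (Submodule.mkQ_surjective _)
        ).of_surjective _ (Submodule.mkQ_surjective _)
      moduleDim_lt := moduleDim_lt_of_forall_minimal_notMem h.moduleDim_lt
        (hsupp ▸ Module.support_subset_of_surjective _ (Submodule.mkQ_surjective _))
        fun p hp => hsupp ▸ hn p hp
      extFinite_of_lt := fun i hi => (hcoker i hi).quotient (hKmap (i + 1)) }
  exact .of_ker_of_coker (Ideal.pow_mem_of_mem 𝔞 hx n hpos) (hK n)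
    (fun i => .of_quotient K (hKmap i) (H _ hquot i)) i

lemma module_finite_of_le_radical_annihilator
    (h : 𝔞 ≤ (Module.annihilator R T).radical)
    (h0 : Module.Finite R (Submodule.torsionBySet R T 𝔞)) : Module.Finite R T := by
  obtain ⟨n, hn⟩ := Ideal.exists_pow_le_of_le_radical_of_fg h (IsNoetherian.noetherian 𝔞)
  have htop : Submodule.torsionBySet R T ↑(𝔞 ^ n) = ⊤ := eq_top_iff.2 fun t _ =>
    (Submodule.mem_torsionBySet_iff _ _).2 fun a => Module.mem_annihilator.1 (hn a.2) t
  have := finite_torsionBySet_pow h0 n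
  rw [htop] at this
  exact .equiv Submodule.topEquiv

theorem FiniteExtBelow.extFinite (hd : d ≤ 2) (h : FiniteExtBelow 𝔞 d T) (i : ℕ) :
    ExtFinite 𝔞 i T := by
  induction d generalizing T i with
  | zero =>
    have := subsingleton_of_moduleDim_lt_zero h.moduleDim_lt
    exact .of_finite i
  | succ d ihd =>
    obtain ⟨J, hJ⟩ : ∃ J : Ideal R, J ≤ (Module.annihilator R T).radical := ⟨⊥, bot_le⟩
    induction J using IsNoetherian.induction generalizing T i with | _ J ihJ
    by_cases h𝔞 : 𝔞 ≤ J
    · have := module_finite_of_le_radical_annihilator (h𝔞.trans hJ)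
        (extFinite_zero_iff.1 (h.extFinite_of_lt 0 d.succ_pos))
      exact .of_finite i
    · obtain ⟨x, hx, hxJ⟩ := SetLike.not_le_iff_exists.1 h𝔞
      refine h.extFinite_of_ker_pow hx (fun n i => ?_) (fun S _ _ hS => ihd (by lia) hS) i
      refine ihJ (J ⊔ Ideal.span {x}) (left_lt_sup.2 fun hle =>
        hxJ (hle (Ideal.mem_span_singleton_self x))) (h.ker hd _) i (sup_le ?_ ?_)
      · exact hJ.trans (Ideal.radical_mono
          (LinearMap.annihilator_le_of_injective _ (Submodule.injective_subtype _)))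
      · exact (Ideal.span_singleton_le_iff_mem _).2
          ⟨n, Module.mem_annihilator.2 fun t => Subtype.ext t.2⟩

end FiniteExtBelow

section LocalCohomologyExtFinite

variable {R : Type u} [CommRing R] [IsNoetherianRing R] {𝔞 : Ideal R}

lemma IsTorsionIdeal.extFinite_of_memFD_one {H : Type u} [AddCommGroup H] [Module R H]
    (hT : IsTorsionIdeal 𝔞 H) (hH : MemFD R 1 H) (h0 : ExtFinite 𝔞 0 H) (h1 : ExtFinite 𝔞 1 H)
    (i : ℕ) : ExtFinite 𝔞 i H := by
  obtain ⟨N, hN, hdim⟩ := hH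
  have : Module.Finite R N := Module.Finite.iff_fg.2 hN
  have hQ : FiniteExtBelow 𝔞 2 (H ⧸ N) :=
    { isTorsionIdeal := hT.of_surjective _ N.mkQ_surjective
      moduleDim_lt := hdim.trans_lt (by decide)
      extFinite_of_lt := fun i hi => by
        obtain rfl | rfl : i = 0 ∨ i = 1 := by lia
        · exact h0.quotient (.of_finite 1)
        · exact h1.quotient (.of_finite 2) }
  exact .of_quotient N (.of_finite i) (hQ.extFinite le_rfl i)

lemma exists_dimensionShift {M : Type u} [AddCommGroup M] [Module R M]
    (h : Ideal.primaryComponent M 𝔞 = ⊥) :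
    ∃ L : ModuleCat.{u} R, (∀ i, ExtFinite 𝔞 i L ↔ ExtFinite 𝔞 (i + 1) M) ∧
      ∀ i, Nonempty ((localCohomology 𝔞 i).obj L ≃ₗ[R]
        (localCohomology 𝔞 (i + 1)).obj (ModuleCat.of R M)) := by
  obtain ⟨E, _, f, hf, hE⟩ := exists_torsionFree_embedding_injective h
  have hS := rangeSequence_shortExact hf
  have : Module.Injective R (rangeSequence f).X₂ := ‹_›
  refine ⟨(rangeSequence f).X₃, fun i => ?_, fun i => ⟨localCohomologyShiftEquiv hS hE i⟩⟩
  have hE1 : Submodule.torsionBySet R E 𝔞 = ⊥ := pow_one 𝔞 ▸ torsionBySet_pow_eq_bot hE 1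
  exact Module.Finite.equiv_iff (.ofBijective _ (extDelta_bijective_of_injective hS hE1 i))

lemma ExtFinite.primaryComponent {M : Type u} [AddCommGroup M] [Module R M] {k : ℕ} (hk : k ≤ 1)
    (h : ∀ i ≤ k, ExtFinite 𝔞 i M) : ExtFinite 𝔞 k (Ideal.primaryComponent M 𝔞) := by
  let P := Ideal.primaryComponent M 𝔞
  obtain rfl | rfl : k = 0 ∨ k = 1 := by lia
  · exact (h 0 le_rfl).submodule_zero
  · have hQ : ExtFinite 𝔞 0 (M ⧸ P) := extFinite_zero_iff.2 (by
      rw [← pow_one 𝔞, torsionBySet_pow_eq_bot primaryComponent_quotient_primaryComponent 1]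
      infer_instance)
    exact (h 1 le_rfl).submodule_succ hQ

theorem extFinite_localCohomology {k : ℕ} (hk : k ≤ 1) {t : ℕ} {M : ModuleCat.{u} R}
    (hM : ∀ i ≤ t + k, ExtFinite 𝔞 i M)
    (h : ∀ j < t, ∀ i, ExtFinite 𝔞 i ((localCohomology 𝔞 j).obj M)) :
    ExtFinite 𝔞 k ((localCohomology 𝔞 t).obj M) := by
  induction t generalizing M with
  | zero =>
    exact (ExtFinite.primaryComponent hk fun i hi => hM i (by lia)).of_linearEquiv
      (localCohomologyZeroEquiv M).symm
  | succ t ih =>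
    let P := Ideal.primaryComponent M 𝔞
    have hP (i) : ExtFinite 𝔞 i P :=
      (h 0 t.succ_pos i).of_linearEquiv (localCohomologyZeroEquiv M)
    obtain ⟨L, hL, e⟩ := exists_dimensionShift
      (primaryComponent_quotient_primaryComponent (𝔞 := 𝔞) (M := M))
    have e' (j) : (localCohomology 𝔞 (j + 1)).obj M ≃ₗ[R] (localCohomology 𝔞 j).obj L :=
      localCohomologyQuotientEquiv isTorsionIdeal_primaryComponent j ≪≫ₗ (e j).some.symm
    refine (ih (M := L) (fun i hi => ?_) fun j hj i => ?_).of_linearEquiv (e' t).symm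
    · exact (hL i).2 ((hM (i + 1) (by lia)).quotient (hP (i + 2)))
    · exact (h (j + 1) (by lia) i).of_linearEquiv (e' j)

theorem extFinite_localCohomology_of_memFD_one {t : ℕ} {M : ModuleCat.{u} R}
    (hM : ∀ i ≤ t, ExtFinite 𝔞 i M)
    (h : ∀ i < t, MemFD R 1 ((localCohomology 𝔞 i).obj M)) :
    ∀ j < t, ∀ i, ExtFinite 𝔞 i ((localCohomology 𝔞 j).obj M) := by
  intro j
  induction j using Nat.strong_induction_on with | _ j ih
  intro hj
  have hlow (k) (hk : k ≤ 1) : ExtFinite 𝔞 k ((localCohomology 𝔞 j).obj M) :=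
    extFinite_localCohomology hk (fun i hi => hM i (by lia)) fun l hl => ih l hl (hl.trans hj)
  exact (isTorsionIdeal_localCohomology M j).extFinite_of_memFD_one (h j hj)
    (hlow 0 zero_le_one) (hlow 1 le_rfl)

end LocalCohomologyExtFinite

theorem associatedPrimes_localCohomology_finite_of_memFD_one_general
    {R : Type u} [CommRing R] [IsNoetherianRing R] (𝔞 : Ideal R) (t : ℕ) (M : ModuleCat.{u} R)
    (hext : ∀ i ≤ t, Module.Finite R (extIdeal 𝔞 i M))
    (h : ∀ i < t, MemFD R 1 ((localCohomology 𝔞 i).obj M)) :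
    (associatedPrimes R ((localCohomology 𝔞 t).obj M)).Finite := by
  have hM (i) (hi : i ≤ t) : ExtFinite 𝔞 i M := extFinite_iff_finite_extIdeal.2 (hext i hi)
  have hHom : ExtFinite 𝔞 0 ((localCohomology 𝔞 t).obj M) :=
    extFinite_localCohomology zero_le_one hM (extFinite_localCohomology_of_memFD_one hM h)
  exact (isTorsionIdeal_localCohomology M t).finite_associatedPrimes (extFinite_zero_iff.1 hHom)

/-- Yang–Shen, Remark 4.2(2) (module case): let `𝔞` be a proper ideal of a noetherian ring
`R`, `t ≥ 0`, and `M` an `R`-module with `Ext^i_R(R/𝔞, M)` finitely generated for all `i`.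
If `H^i_𝔞(M) ∈ FD_{≤1}` for all `i < t`, then the set `Ass_R H^t_𝔞(M)` is finite. -/
theorem associatedPrimes_localCohomology_finite_of_memFD_one
    {R : Type u} [CommRing R] [IsNoetherianRing R] (𝔞 : Ideal R) (ha : 𝔞 ≠ ⊤) (t : ℕ)
    (M : ModuleCat.{u} R) (hext : ∀ i : ℕ, Module.Finite R (extIdeal 𝔞 i M))
    (h : ∀ i : ℕ, i < t → MemFD R 1 ((localCohomology 𝔞 i).obj M)) :
    (associatedPrimes R ((localCohomology 𝔞 t).obj M)).Finite :=
  associatedPrimes_localCohomology_finite_of_memFD_one_general 𝔞 t M (fun i _ => hext i) h
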